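/- arXiv:2301.11019 — 2 statements merged into one kernel-verified Lean document; each statement's English description precedes it below -/
import Mathlib

section
/- For every sequence of injective maps x_n : Fin n → ℝ (n ≥ 3), consider the random graph process on Fin n, and let τ be the least time 0 ≤ t ≤ N such that both: (i) every index has degree at least 1 in G_t, and (ii) every index u of degree exactly 1 in G_t, with unique neighbour v, forms a secure ordered pair (u,v). Then the probability that the whole set Fin n is reconstructible from G_τ while Fin n is not reconstructible from G_t for every t < τ tends to 1 as n → ∞. -/
def Reconstructible {n : ℕ} (x : Fin n → ℝ) (P : Set (Sym2 (Fin n))) (U : Set (Fin n)) : Prop :=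
  ∀ w : Fin n → ℝ, Function.Injective w →
    (∀ i j : Fin n, s(i, j) ∈ P → |w i - w j| = |x i - x j|) →
    ∀ i ∈ U, ∀ j ∈ U, |w i - w j| = |x i - x j|

instance (n : ℕ) : Nonempty (Fin (n.choose 2) ≃ {e : Sym2 (Fin n) // ¬ e.IsDiag}) := by
  have h : Fintype.card {e : Sym2 (Fin n) // ¬ e.IsDiag} = n.choose 2 := by
    simpa using Sym2.card_subtype_not_diag (α := Fin n)
  exact ⟨(Fintype.equivFinOfCardEq h).symm⟩

instance (n : ℕ) : MeasurableSpace (Fin (n.choose 2) ≃ {e : Sym2 (Fin n) // ¬ e.IsDiag}) := ⊤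

/-- The uniform measure on orderings of the `N = n.choose 2` unordered pairs of distinct
indices of `Fin n`, modelling the random graph process. -/
noncomputable def processMeasure (n : ℕ) :
    MeasureTheory.Measure (Fin (n.choose 2) ≃ {e : Sym2 (Fin n) // ¬ e.IsDiag}) :=
  (PMF.uniformOfFintype _).toMeasure

/-- `Gt σ t` is the set of the first `t` revealed pairs in the ordering `σ`. -/
def Gt {n : ℕ} (σ : Fin (n.choose 2) ≃ {e : Sym2 (Fin n) // ¬ e.IsDiag}) (t : ℕ) :
    Set (Sym2 (Fin n)) :=
  {e | ∃ s : Fin (n.choose 2), (s : ℕ) < t ∧ (σ s : Sym2 (Fin n)) = e}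

/-- The degree of an index `u`: the number of revealed pairs containing `u`. -/
noncomputable def degree {n : ℕ} (G : Set (Sym2 (Fin n))) (u : Fin n) : ℕ :=
  {e ∈ G | u ∈ e}.ncard

/-- A pair `(u, v)` is secure if the reflection of `x u` over `x v` is also a point. -/
def Secure {n : ℕ} (x : Fin n → ℝ) (u v : Fin n) : Prop :=
  u ≠ v ∧ ∃ ℓ : Fin n, x ℓ = 2 * x v - x u

namespace R4
open MeasureTheory

/-- iid uniform `[0,1]` labels. -/
noncomputable def lab (ι : Type*) [Fintype ι] : Measure (ι → ℝ) :=
  Measure.pi (fun _ => (volume.restrict (Set.Icc (0:ℝ) 1)))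

instance isProb01 : IsProbabilityMeasure (volume.restrict (Set.Icc (0:ℝ) 1)) := by
  constructor; simp

instance isProbLab (ι : Type*) [Fintype ι] : IsProbabilityMeasure (lab ι) := by
  unfold lab; infer_instance

lemma lab_perm {ι : Type*} [Fintype ι] (ρ : ι ≃ ι) (B : Set (ι → ℝ)) :
    lab ι ((fun u : ι → ℝ => u ∘ ρ) ⁻¹' B) = lab ι B := by
  have h := measurePreserving_piCongrLeft
    (fun _ : ι => (volume.restrict (Set.Icc (0:ℝ) 1))) ρ.symm
  have h2 := h.measure_preimage_equiv B
  have h3 : ((MeasurableEquiv.piCongrLeft (fun _ : ι => ℝ) ρ.symm : (ι → ℝ) ≃ᵐ (ι → ℝ)) : (ι → ℝ) → (ι → ℝ)) = (fun u : ι → ℝ => u ∘ ρ) := by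
    funext u
    funext i
    have := Equiv.piCongrLeft_apply_apply (fun _ : ι => ℝ) ρ.symm u (ρ i)
    simp at this
    simpa [MeasurableEquiv.piCongrLeft] using this
  rw [h3] at h2
  exact h2

lemma lab_tie {ι : Type*} [Fintype ι] {e f : ι} (h : e ≠ f) :
    lab ι {u | u e = u f} = 0 := by
  classical
  have h1 : (volume : Measure (ι → ℝ)) {u | u e = u f} = 0 := by
    let s : Submodule ℝ (ι → ℝ) :=
      LinearMap.ker (LinearMap.proj (R := ℝ) (φ := fun _ : ι => ℝ) e - LinearMap.proj f)
    have hs : s ≠ ⊤ := by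
      intro hs
      have : (Pi.single e 1 : ι → ℝ) ∈ s := by rw [hs]; trivial
      simp [s, h] at this
    have := Measure.addHaar_submodule (volume : Measure (ι → ℝ)) s hs
    convert this using 2
    ext u
    simp [s, sub_eq_zero]
  have h2 : lab ι = (volume : Measure (ι → ℝ)).restrict (Set.univ.pi fun _ => Set.Icc 0 1) := by
    unfold lab
    rw [volume_pi, Measure.restrict_pi_pi]
  rw [h2]
  exact Measure.absolutelyContinuous_of_le Measure.restrict_le_self h1

lemma lab_inj {ι : Type*} [Fintype ι] :
    lab ι {u | ¬ Function.Injective u} = 0 := by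
  have : {u : ι → ℝ | ¬ Function.Injective u} ⊆ ⋃ q : {q : ι × ι // q.1 ≠ q.2}, {u | u q.1.1 = u q.1.2} := by
    intro u hu
    simp only [Function.Injective, Set.mem_setOf_eq, not_forall] at hu
    obtain ⟨a, b, hab, hne⟩ := hu
    exact Set.mem_iUnion.2 ⟨⟨(a,b), hne⟩, hab⟩
  refine measure_mono_null this ?_
  rw [measure_iUnion_null_iff]
  intro q
  exact lab_tie q.2

/-- the labels sorted by `σ`. -/
def Srt {ι : Type*} {N : ℕ} (σ : Fin N ≃ ι) : Set (ι → ℝ) := {u | StrictMono (u ∘ σ)}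

lemma srt_meas {ι : Type*} [Fintype ι] {N : ℕ} (σ : Fin N ≃ ι) : MeasurableSet (Srt σ) := by
  have : Srt σ = ⋂ q : {q : Fin N × Fin N // q.1 < q.2}, {u | u (σ q.1.1) < u (σ q.1.2)} := by
    ext u
    simp only [Srt, StrictMono, Set.mem_setOf_eq, Set.mem_iInter, Function.comp]
    exact ⟨fun h q => h q.2, fun h a b hab => h ⟨(a,b), hab⟩⟩
  rw [this]
  refine MeasurableSet.iInter fun q => ?_
  exact measurableSet_lt (measurable_pi_apply _) (measurable_pi_apply _)

lemma srt_disj {ι : Type*} {N : ℕ} {σ τ : Fin N ≃ ι} (h : σ ≠ τ) : Disjoint (Srt σ) (Srt τ) := by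
  rw [Set.disjoint_left]
  intro u h1 h2
  apply h
  simp only [Srt, Set.mem_setOf_eq] at h1 h2
  have hinj : Function.Injective u := by
    have := h1.injective
    intro a b hab
    have := this (a₁ := σ.symm a) (a₂ := σ.symm b) (by simpa using hab)
    simpa using this
  have hr : Set.range (u ∘ σ) = Set.range (u ∘ τ) := by
    rw [Set.range_comp, Set.range_comp, σ.surjective.range_eq, τ.surjective.range_eq]
  have := (StrictMono.range_inj h1 h2).1 hr
  ext i
  exact hinj (congrFun this i)

lemma srt_cover {ι : Type*} [Fintype ι] {N : ℕ} (hN : Fintype.card ι = N) {u : ι → ℝ}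
    (hu : Function.Injective u) : ∃ σ : Fin N ≃ ι, u ∈ Srt σ := by
  classical
  let s : Finset ℝ := Finset.univ.image u
  have hs : s.card = N := by
    rw [Finset.card_image_of_injective _ hu, ← hN]; rfl
  let o := s.orderIsoOfFin hs
  let e : ι ≃ s := Equiv.ofBijective (fun i => ⟨u i, Finset.mem_image_of_mem _ (Finset.mem_univ i)⟩) (by
    constructor
    · intro a b hab
      exact hu (by simpa using hab)
    · rintro ⟨y, hy⟩
      obtain ⟨i, _, rfl⟩ := Finset.mem_image.1 hy
      exact ⟨i, rfl⟩)
  refine ⟨o.toEquiv.trans e.symm, ?_⟩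
  intro a b hab
  have key : ∀ y : s, u (e.symm y) = y := by
    intro y
    have := e.apply_symm_apply y
    exact congrArg Subtype.val this
  simp only [Function.comp, Equiv.trans_apply, key]
  exact o.strictMono hab

lemma srt_measure {ι : Type*} [Fintype ι] {N : ℕ} (hN : Fintype.card ι = N)
    [Fintype (Fin N ≃ ι)] (σ : Fin N ≃ ι) :
    lab ι (Srt σ) = (Fintype.card (Fin N ≃ ι) : ENNReal)⁻¹ := by
  classical
  have heq : ∀ τ : Fin N ≃ ι, lab ι (Srt τ) = lab ι (Srt σ) := by
    intro τ
    rw [← lab_perm (σ.symm.trans τ) (Srt σ)]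
    congr 1
    ext u
    simp only [Srt, Set.mem_setOf_eq, Set.mem_preimage]
    have : (u ∘ ⇑(σ.symm.trans τ)) ∘ ⇑σ = u ∘ τ := by funext i; simp
    rw [this]
  have htot : lab ι (⋃ τ : Fin N ≃ ι, Srt τ) = 1 := by
    rw [← measure_univ (μ := lab ι)]
    apply le_antisymm (measure_mono (Set.subset_univ _))
    have : (Set.univ : Set (ι → ℝ)) ⊆ (⋃ τ : Fin N ≃ ι, Srt τ) ∪ {u | ¬ Function.Injective u} := by
      intro u _
      by_cases h : Function.Injective u
      · left
        obtain ⟨τ, hτ⟩ := srt_cover hN h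
        exact Set.mem_iUnion.2 ⟨τ, hτ⟩
      · right; exact h
    refine (measure_mono this).trans ((measure_union_le _ _).trans ?_)
    rw [lab_inj, add_zero]
  rw [measure_iUnion (fun a b hab => srt_disj hab) (fun τ => srt_meas τ), tsum_fintype] at htot
  simp only [heq, Finset.sum_const, nsmul_eq_mul, Finset.card_univ] at htot
  exact ENNReal.eq_inv_of_mul_eq_one_left (by rw [mul_comm]; exact htot)

lemma transfer {ι : Type*} [Fintype ι] {N : ℕ} (hN : Fintype.card ι = N)
    [Fintype (Fin N ≃ ι)] [Nonempty (Fin N ≃ ι)] [MeasurableSpace (Fin N ≃ ι)]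
    (Q : Set (Fin N ≃ ι)) (hQ : MeasurableSet Q) (B : Set (ι → ℝ))
    (h : ∀ σ ∈ Q, Srt σ ⊆ B) :
    (PMF.uniformOfFintype (Fin N ≃ ι)).toMeasure Q ≤ lab ι B := by
  classical
  rw [PMF.toMeasure_uniformOfFintype_apply Q hQ]
  have h1 : lab ι (⋃ σ : Q, Srt (σ : Fin N ≃ ι)) ≤ lab ι B :=
    measure_mono (Set.iUnion_subset fun σ => h σ σ.2)
  rw [measure_iUnion (fun a b hab => srt_disj (fun h => hab (Subtype.ext h))) (fun τ => srt_meas _),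
    tsum_fintype] at h1
  simp only [srt_measure hN, Finset.sum_const, nsmul_eq_mul, Finset.card_univ] at h1
  rw [ENNReal.div_eq_inv_mul, mul_comm]
  exact h1

end R4

namespace R4
open MeasureTheory

lemma int_step (p a b : ℝ) (h0 : 0 ≤ p) (h1 : p ≤ 1) :
    ∫ x in Set.Icc (0:ℝ) 1, (if x < p then a else b) = p * a + (1 - p) * b := by
  have h : (fun x : ℝ => if x < p then a else b) =
      fun x => (Set.Iio p).indicator (fun _ => a - b) x + b := by
    funext x
    by_cases hx : x < p <;> simp [hx]
  rw [h, integral_add, integral_indicator_const _ measurableSet_Iio, integral_const]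
  · have : (volume.restrict (Set.Icc (0:ℝ) 1)).real (Set.Iio p) = p := by
      rw [measureReal_restrict_apply measurableSet_Iio]
      have : Set.Iio p ∩ Set.Icc (0:ℝ) 1 = Set.Ico 0 p := by
        ext x; simp only [Set.mem_inter_iff, Set.mem_Iio, Set.mem_Icc, Set.mem_Ico]
        constructor
        · rintro ⟨a, b, c⟩; exact ⟨b, a⟩
        · rintro ⟨a, b⟩; exact ⟨b, a, by linarith⟩
      rw [this]; simp [h0]
    rw [this]; simp; ring
  · exact (integrable_const _).indicator measurableSet_Iio
  · exact integrable_const _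

lemma step_integrable {ι : Type*} [Fintype ι] (p a b : ι → ℝ) :
    Integrable (fun u : ι → ℝ => ∏ e, (if u e < p e then a e else b e)) (lab ι) := by
  unfold lab
  refine Integrable.fintype_prod (f := fun e x => if x < p e then a e else b e) ?_
  intro e
  have h : (fun x : ℝ => if x < p e then a e else b e) =
      fun x => (Set.Iio (p e)).indicator (fun _ => a e - b e) x + b e := by
    funext x
    by_cases hx : x < p e <;> simp [hx]
  rw [h]
  exact ((integrable_const _).indicator measurableSet_Iio).add (integrable_const _)

lemma step_integral {ι : Type*} [Fintype ι] (p a b : ι → ℝ) (h0 : ∀ e, 0 ≤ p e)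
    (h1 : ∀ e, p e ≤ 1) :
    ∫ u, ∏ e, (if u e < p e then a e else b e) ∂(lab ι) = ∏ e, (p e * a e + (1 - p e) * b e) := by
  unfold lab
  rw [integral_fintype_prod_eq_prod (f := fun e x => if x < p e then a e else b e)]
  exact Finset.prod_congr rfl fun e _ => int_step _ _ _ (h0 e) (h1 e)

lemma markov {Ω : Type*} [MeasurableSpace Ω] (μ : Measure Ω) [IsProbabilityMeasure μ] (f : Ω → ℝ)
    (hf : ∀ u, 0 ≤ f u) (hi : Integrable f μ) (c : ℝ) (hc : 0 < c) (A : Set Ω)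
    (hA : ∀ u ∈ A, c ≤ f u) : μ.real A ≤ c⁻¹ * ∫ u, f u ∂μ := by
  have h1 := mul_meas_ge_le_integral_of_nonneg (Filter.Eventually.of_forall hf) hi c
  have h2 : μ.real A ≤ μ.real {x | c ≤ f x} := measureReal_mono hA
  rw [← div_eq_inv_mul, le_div_iff₀ hc]
  nlinarith

open Classical in
lemma prob_low {ι : Type*} [Fintype ι] (E F : Finset ι) (hEF : Disjoint E F)
    (p0 p1 z : ℝ) (h0 : 0 ≤ p0) (h0' : p0 ≤ 1) (h1 : 0 ≤ p1) (h1' : p1 ≤ 1) (hz : 0 < z)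
    (hz1 : z ≤ 1) (k : ℕ) :
    (lab ι).real {u | (∀ e ∈ E, u e < p1) ∧ (F.filter (fun e => u e < p0)).card ≤ k} ≤
      p1 ^ E.card * (z⁻¹) ^ k * Real.exp (-(p0 * (1 - z) * F.card)) := by
  have key := markov (lab ι) (fun u => ∏ e, (if u e < (if e ∈ E then p1 else p0)
      then (if e ∈ F then z else 1) else (if e ∈ E then 0 else 1))) ?_
      (step_integrable (fun e => if e ∈ E then p1 else p0) (fun e => if e ∈ F then z else 1)
        (fun e => if e ∈ E then 0 else 1)) (z ^ k) (pow_pos hz k)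
      {u | (∀ e ∈ E, u e < p1) ∧ (F.filter (fun e => u e < p0)).card ≤ k} ?_
  · refine key.trans ?_
    rw [step_integral (fun e => if e ∈ E then p1 else p0) (fun e => if e ∈ F then z else 1)
        (fun e => if e ∈ E then 0 else 1) (by intro e; split_ifs <;> assumption)
        (by intro e; split_ifs <;> assumption)]
    have : ∏ e, ((if e ∈ E then p1 else p0) * (if e ∈ F then z else 1) +
        (1 - (if e ∈ E then p1 else p0)) * (if e ∈ E then 0 else 1)) =
        (∏ e, if e ∈ E then p1 else 1) * ∏ e, if e ∈ F then (1 - p0 * (1 - z)) else 1 := by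
      rw [← Finset.prod_mul_distrib]
      refine Finset.prod_congr rfl fun e _ => ?_
      by_cases hE : e ∈ E
      · have hF : e ∉ F := fun hF => Finset.disjoint_left.1 hEF hE hF
        simp [hE, hF]
      · by_cases hF : e ∈ F
        · simp [hE, hF]; ring
        · simp [hE, hF]
    rw [this]
    have hprod : ∀ (A : Finset ι) (c : ℝ), (∏ e, if e ∈ A then c else 1) = c ^ A.card := by
      intro A c
      rw [Finset.prod_ite_mem]; simp
    rw [hprod, hprod]
    have h3 : (1 - p0 * (1 - z)) ^ F.card ≤ Real.exp (-(p0 * (1 - z) * F.card)) := by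
      have : 1 - p0 * (1 - z) ≤ Real.exp (-(p0 * (1 - z))) := by
        have := Real.add_one_le_exp (-(p0 * (1 - z))); linarith
      calc _ ≤ Real.exp (-(p0 * (1 - z))) ^ F.card := by
            apply pow_le_pow_left₀ _ this
            nlinarith
        _ = _ := by rw [← Real.exp_nat_mul]; congr 1; ring
    rw [← inv_pow]
    calc _ ≤ z⁻¹ ^ k * (p1 ^ E.card * Real.exp (-(p0 * (1 - z) * F.card))) := by gcongr
      _ = _ := by ring
  · intro u
    refine Finset.prod_nonneg fun e _ => ?_
    split_ifs <;> linarith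
  · rintro u ⟨hE, hF⟩
    have : ∏ e, (if u e < (if e ∈ E then p1 else p0)
      then (if e ∈ F then z else 1) else (if e ∈ E then 0 else 1)) =
      ∏ e, if e ∈ F.filter (fun e => u e < p0) then z else 1 := by
      refine Finset.prod_congr rfl fun e _ => ?_
      by_cases hE' : e ∈ E
      · have hF : e ∉ F := fun hF => Finset.disjoint_left.1 hEF hE' hF
        simp [hE', hF, hE e hE']
      · by_cases hF : e ∈ F <;> simp [hE', hF]
    rw [this, Finset.prod_ite_mem]
    simp only [Finset.univ_inter, Finset.prod_const]
    exact pow_le_pow_of_le_one hz.le hz1 hF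

open Classical in
lemma prob_high {ι : Type*} [Fintype ι] (F : Finset ι)
    (p z : ℝ) (h0 : 0 ≤ p) (h0' : p ≤ 1) (hz : 1 ≤ z) (k : ℕ) :
    (lab ι).real {u | k ≤ (F.filter (fun e => u e < p)).card} ≤
      (z⁻¹) ^ k * Real.exp (p * z * F.card) := by
  have hz0 : 0 < z := by linarith
  have key := markov (lab ι) (fun u => ∏ e, (if u e < p
      then (if e ∈ F then z else 1) else 1)) ?_
      (step_integrable (fun e => p) (fun e => if e ∈ F then z else 1)
        (fun e => 1)) (z ^ k) (pow_pos hz0 k)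
      {u | k ≤ (F.filter (fun e => u e < p)).card} ?_
  · refine key.trans ?_
    rw [step_integral (fun e => p) (fun e => if e ∈ F then z else 1)
        (fun e => 1) (fun _ => h0) (fun _ => h0')]
    have : ∏ e, (p * (if e ∈ F then z else 1) + (1 - p) * 1) =
        ∏ e, if e ∈ F then (1 + p * (z - 1)) else 1 := by
      refine Finset.prod_congr rfl fun e _ => ?_
      by_cases hF : e ∈ F
      · simp [hF]; ring
      · simp [hF]
    rw [this]
    rw [Finset.prod_ite_mem]; simp only [Finset.univ_inter, Finset.prod_const]
    have h3 : (1 + p * (z - 1)) ^ F.card ≤ Real.exp (p * z * F.card) := by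
      have : 1 + p * (z - 1) ≤ Real.exp (p * z) := by
        have := Real.add_one_le_exp (p * z); nlinarith
      calc _ ≤ Real.exp (p * z) ^ F.card := by
            apply pow_le_pow_left₀ _ this
            nlinarith
        _ = _ := by rw [← Real.exp_nat_mul]; congr 1; ring
    rw [← inv_pow]
    gcongr
  · intro u
    refine Finset.prod_nonneg fun e _ => ?_
    split_ifs <;> linarith
  · intro u hF
    have : ∏ e, (if u e < p then (if e ∈ F then z else 1) else 1) =
      ∏ e, if e ∈ F.filter (fun e => u e < p) then z else 1 := by
      refine Finset.prod_congr rfl fun e _ => ?_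
      by_cases hF : e ∈ F <;> simp [hF]
    rw [this, Finset.prod_ite_mem]
    simp only [Finset.univ_inter, Finset.prod_const]
    exact pow_le_pow_right₀ hz hF

open Classical in
lemma second_moment {ι : Type*} [Fintype ι] {V : Type*} [Fintype V] (F : V → Finset ι) (m : ℕ)
    (hm : 1 ≤ m)
    (hF : ∀ i, (F i).card = m) (hF2 : ∀ i j, i ≠ j → 2 * m - 1 ≤ (F i ∪ F j).card)
    (p : ℝ) (h0 : 0 ≤ p) (h1 : p < 1) (hV : 0 < Fintype.card V) :
    (lab ι).real {u | ∀ i, ∃ e ∈ F i, u e < p} ≤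
      1 / (Fintype.card V * (1 - p) ^ m) + p / (1 - p) := by
  set q := 1 - p with hq
  have hq0 : 0 < q := by linarith
  let I : Finset ι → (ι → ℝ) → ℝ := fun A u => ∏ e, (if u e < p then (if e ∈ A then 0 else 1) else 1)
  have hI : ∀ A, Integrable (I A) (lab ι) := fun A =>
    step_integrable (fun e => p) (fun e => if e ∈ A then 0 else 1) (fun e => 1)
  have hII : ∀ A, ∫ u, I A u ∂(lab ι) = q ^ A.card := by
    intro A
    have := step_integral (fun _ : ι => p) (fun e => if e ∈ A then 0 else 1) (fun e => 1)
      (fun _ => h0) (fun _ => h1.le)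
    refine this.trans ?_
    have : ∀ e, (p * (if e ∈ A then 0 else 1) + (1 - p) * 1) = if e ∈ A then q else 1 := by
      intro e; split_ifs <;> simp [hq]
    simp only [this]
    rw [Finset.prod_ite_mem]; simp
  have hmul : ∀ A B u, I A u * I B u = I (A ∪ B) u := by
    intro A B u
    simp only [I]
    rw [← Finset.prod_mul_distrib]
    refine Finset.prod_congr rfl fun e _ => ?_
    by_cases h1 : e ∈ A <;> by_cases h2 : e ∈ B <;> by_cases h3 : u e < p <;> simp [h1, h2, h3]
  set N : ℝ := (Fintype.card V : ℝ) with hN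
  have hN0 : 0 < N := by rw [hN]; exact_mod_cast hV
  set M : ℝ := N * q ^ m with hM
  have hM0 : 0 < M := by positivity
  let f : (ι → ℝ) → ℝ := fun u => (∑ i, I (F i) u - M) ^ 2
  have hf : f = fun u => ∑ i, ∑ j, I (F i ∪ F j) u - 2 * M * ∑ i, I (F i) u + M ^ 2 := by
    funext u
    simp only [f, ← hmul]
    rw [sub_sq, sq (∑ i, I (F i) u), Finset.sum_mul_sum]
    ring
  have i1 : Integrable (fun u => ∑ i, ∑ j, I (F i ∪ F j) u) (lab ι) :=
    integrable_finsetSum _ fun i _ => integrable_finsetSum _ fun j _ => hI _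
  have i2 : Integrable (fun u => 2 * M * ∑ i, I (F i) u) (lab ι) :=
    (integrable_finsetSum _ fun i _ => hI _).const_mul _
  have hfi : Integrable f (lab ι) := by
    rw [hf]
    exact (i1.sub i2).add (integrable_const _)
  have hInt : ∫ u, f u ∂(lab ι) = ∑ i, ∑ j, q ^ (F i ∪ F j).card - M ^ 2 := by
    rw [hf]
    have e1 : ∫ u, (∑ i, ∑ j, I (F i ∪ F j) u - 2 * M * ∑ i, I (F i) u + M ^ 2) ∂(lab ι) =
      ∫ u, (∑ i, ∑ j, I (F i ∪ F j) u) ∂(lab ι) - ∫ u, (2 * M * ∑ i, I (F i) u) ∂(lab ι)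
        + ∫ u, M ^ 2 ∂(lab ι) := by
      rw [← integral_sub i1 i2]
      exact integral_add (i1.sub i2) (integrable_const _)
    rw [e1, integral_const_mul, integral_finsetSum _ fun i _ => hI _,
      integral_finsetSum _ fun i _ => integrable_finsetSum _ fun j _ => hI _]
    have e2 : ∀ i, ∫ u, ∑ j, I (F i ∪ F j) u ∂(lab ι) = ∑ j, q ^ (F i ∪ F j).card := by
      intro i
      rw [integral_finsetSum _ fun j _ => hI _]
      simp only [hII]
    simp only [e2, hII, hF]
    simp only [Finset.sum_const, Finset.card_univ, nsmul_eq_mul, integral_const]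
    simp only [probReal_univ, one_smul, ← hN, ← hM]
    ring
  have hb : ∑ i, ∑ j, q ^ (F i ∪ F j).card ≤ M + N ^ 2 * q ^ (2 * m - 1) := by
    have : ∀ i j, q ^ (F i ∪ F j).card ≤ (if i = j then q ^ m else 0) + q ^ (2 * m - 1) := by
      intro i j
      by_cases h : i = j
      · subst h; simp [hF]; positivity
      · simp only [h, if_false, zero_add]
        exact pow_le_pow_of_le_one hq0.le (by linarith) (hF2 i j h)
    calc _ ≤ ∑ i : V, ∑ j : V, ((if i = j then q ^ m else 0) + q ^ (2 * m - 1)) :=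
          Finset.sum_le_sum fun i _ => Finset.sum_le_sum fun j _ => this i j
      _ = _ := by
        simp only [Finset.sum_add_distrib, Finset.sum_ite_eq, Finset.mem_univ, if_true,
          Finset.sum_const, Finset.card_univ, nsmul_eq_mul]
        rw [hM, ← hN]; ring
  have key := markov (lab ι) f (fun u => sq_nonneg _) hfi (M ^ 2) (by positivity)
    {u | ∀ i, ∃ e ∈ F i, u e < p} ?_
  · refine key.trans ?_
    rw [hInt]
    have hqq : q ^ (2 * m - 1) = q ^ m * q ^ m / q := by
      rw [eq_div_iff hq0.ne', ← pow_succ, ← pow_add]; congr 1; omega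
    rw [hqq] at hb
    have : N ^ 2 * (q ^ m * q ^ m / q) = M ^ 2 / q := by rw [hM]; ring
    rw [this] at hb
    calc _ ≤ (M ^ 2)⁻¹ * (M + M ^ 2 / q - M ^ 2) := by gcongr
      _ = 1 / M + (1 - q) / q := by field_simp; ring
      _ = _ := by rw [hq]; ring_nf
  · intro u hu
    have : ∀ i, I (F i) u = 0 := by
      intro i
      obtain ⟨e, he, hep⟩ := hu i
      exact Finset.prod_eq_zero (Finset.mem_univ e) (by simp [he, hep])
    simp [f, this]

end R4

namespace R4

lemma sep {V W : Type*} (A : Finset V) (f : V → W) (h m : ℕ) :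
    (∀ c, {i ∈ (A : Set V) | f i = c}.ncard ≤ m) → h ≤ A.card →
    ∃ T : Set W, h ≤ {i ∈ (A : Set V) | f i ∈ T}.ncard ∧ {i ∈ (A : Set V) | f i ∈ T}.ncard ≤ h + m := by
  classical
  induction A using Finset.strongInduction with
  | H A ih =>
    intro hm hA
    have conv : ∀ (B : Finset V) (P : V → Prop), {i ∈ (B : Set V) | P i}.ncard = (B.filter P).card := by
      intro B P
      rw [← Set.ncard_coe_finset]; congr 1; ext i; simp
    simp only [conv] at *
    by_cases hs : A.card ≤ h + m
    · refine ⟨Set.univ, ?_, ?_⟩ <;> simpa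
    · have hne : A.Nonempty := Finset.card_pos.1 (by omega)
      obtain ⟨a, ha⟩ := hne
      let A' := A.filter (fun i => f i ≠ f a)
      have hsub : A' ⊂ A := by
        refine (Finset.filter_ssubset).2 ⟨a, ha, by simp⟩
      have hcard : (A.filter (fun i => f i = f a)).card + A'.card = A.card := 
        Finset.card_filter_add_card_filter_not _
      have := hm (f a)
      obtain ⟨T, h1, h2⟩ := ih A' hsub (fun c => by
        refine le_trans (Finset.card_le_card ?_) (hm c)
        exact Finset.filter_subset_filter _ hsub.1) (by omega)
      refine ⟨T \ {f a}, ?_⟩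
      have e : A.filter (fun i => f i ∈ T \ {f a}) = A'.filter (fun i => f i ∈ T) := by
        ext i; simp [A']; tauto
      have e' := congrArg Finset.card e
      constructor
      · refine h1.trans (le_of_eq ?_)
        rw [← e']
        congr
      · refine le_trans (le_of_eq ?_) h2
        rw [← e']
        congr

lemma nonrec_aux {n : ℕ} (x : Fin n → ℝ) (hx : Function.Injective x) (P : Set (Sym2 (Fin n)))
    (hP : ∀ e ∈ P, ¬ e.IsDiag)
    (u : Fin n) (M : ℝ) (hM : ∀ j, x j ≠ M) (he : ∀ j, s(u, j) ∈ P → |M - x j| = |x u - x j|)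
    (j0 : Fin n) (hj : j0 ≠ u) (hne : |M - x j0| ≠ |x u - x j0|) :
    ¬ Reconstructible x P Set.univ := by
  intro h
  have hw := h (Function.update x u M) ?_ ?_ u trivial j0 trivial
  · simp [hj] at hw
    exact hne hw
  · intro a b hab
    by_cases ha : a = u <;> by_cases hb : b = u
    · rw [ha, hb]
    · subst ha; simp [hb] at hab; exact absurd hab.symm (hM b)
    · subst hb; simp [ha] at hab; exact absurd hab (hM a)
    · simp [ha, hb] at hab; exact hx hab
  · intro i j hij
    have hij' : i ≠ j := fun h => hP _ hij (by simpa using h)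
    by_cases hi : i = u
    · subst hi
      simp [Ne.symm hij']
      exact he j hij
    · by_cases hj : j = u
      · subst hj
        simp [hi]
        rw [abs_sub_comm, he i (by rwa [Sym2.eq_swap]), abs_sub_comm]
      · simp [hi, hj]

/-- the stopping condition -/
def Cond {n : ℕ} (x : Fin n → ℝ) (P : Set (Sym2 (Fin n))) : Prop :=
  (∀ u : Fin n, 1 ≤ degree P u) ∧
  (∀ u v : Fin n, degree P u = 1 → u ≠ v → s(u, v) ∈ P → Secure x u v)

lemma nonrecon {n : ℕ} (hn : 3 ≤ n) (x : Fin n → ℝ) (hx : Function.Injective x)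
    (P : Set (Sym2 (Fin n))) (hP : ∀ e ∈ P, ¬ e.IsDiag) (hc : ¬ Cond x P) :
    ¬ Reconstructible x P Set.univ := by
  have third : ∀ a b : Fin n, ∃ c, c ≠ a ∧ c ≠ b := by
    intro a b
    have : ∃ c ∈ (Finset.univ : Finset (Fin n)), c ∉ ({a, b} : Finset (Fin n)) := by
      apply Finset.exists_mem_notMem_of_card_lt_card
      have := Finset.card_le_two (a := a) (b := b)
      simp; omega
    obtain ⟨c, _, hc⟩ := this
    simp at hc
    exact ⟨c, hc⟩
  unfold Cond at hc
  rw [not_and_or] at hc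
  rcases hc with hc | hc
  · push Not at hc
    obtain ⟨u, hu⟩ := hc
    have hu0 : degree P u = 0 := by omega
    unfold degree at hu0
    rw [Set.ncard_eq_zero (Set.toFinite _)] at hu0
    obtain ⟨j0, hj0, _⟩ := third u u
    have hfin : (Set.range x ∪ {2 * x j0 - x u}).Finite := Set.toFinite _
    obtain ⟨M, hM⟩ := hfin.exists_notMem
    simp at hM
    refine nonrec_aux x hx P hP u M (fun j h => hM.2 j h) ?_ j0 hj0 ?_
    · intro j hj
      exfalso
      have : s(u, j) ∈ {e ∈ P | u ∈ e} := ⟨hj, by simp⟩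
      rw [hu0] at this
      exact this
    · intro h
      rcases abs_eq_abs.1 h with h | h
      · exact hM.2 u (by linarith)
      · exact hM.1 (by linarith)
  · push Not at hc
    obtain ⟨u, v, hd, huv, hm, hs⟩ := hc
    obtain ⟨j0, hj0, hj1⟩ := third u v
    have hxuv : x u ≠ x v := fun h => huv (hx h)
    refine nonrec_aux x hx P hP u (2 * x v - x u) (fun j h => hs ⟨huv, j, h⟩) ?_ j0 hj0 ?_
    · intro j hj
      unfold degree at hd
      obtain ⟨e, he⟩ := Set.ncard_eq_one.1 hd
      have h1 : s(u, j) ∈ {e ∈ P | u ∈ e} := ⟨hj, by simp⟩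
      have h2 : s(u, v) ∈ {e ∈ P | u ∈ e} := ⟨hm, by simp⟩
      rw [he] at h1 h2
      have h3 : s(u, j) = s(u, v) := h1.trans h2.symm
      have : j = v := Sym2.congr_right.1 h3
      subst this
      rw [abs_sub_comm]; congr 1; ring
    · intro h
      rcases abs_eq_abs.1 h with h | h
      · apply hxuv; linarith
      · apply hj1; apply hx; linarith

abbrev Ed (n : ℕ) := {e : Sym2 (Fin n) // ¬ e.IsDiag}

/-- edges at `i` -/
noncomputable def star {n : ℕ} (i : Fin n) : Finset (Ed n) :=
  open Classical in Finset.univ.filter (fun e => i ∈ e.1)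

noncomputable def btw {n : ℕ} (A B : Finset (Fin n)) : Finset (Ed n) :=
  open Classical in Finset.univ.filter (fun e => ∃ a ∈ A, ∃ b ∈ B, e.1 = s(a, b))

noncomputable def ins {n : ℕ} (S : Finset (Fin n)) : Finset (Ed n) :=
  open Classical in Finset.univ.filter (fun e => ∀ i ∈ e.1, i ∈ S)

noncomputable def cnt {n : ℕ} (u : Ed n → ℝ) (p : ℝ) (F : Finset (Ed n)) : ℕ :=
  open Classical in (F.filter (fun e => u e < p)).card

def ed {n : ℕ} {i j : Fin n} (h : i ≠ j) : Ed n := ⟨s(i, j), by simpa using h⟩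

structure Good {n : ℕ} (x : Fin n → ℝ) (p0 p1 : ℝ) (u : Ed n → ℝ) : Prop where
  g0 : ∃ i, ∀ e ∈ star i, ¬ u e < p0
  g1 : ∀ i, 2 ≤ cnt u p1 (star i)
  g2 : ∀ i j (h : i ≠ j), cnt u p0 (star i) ≤ 9 → cnt u p0 (star j) ≤ 9 → ¬ u (ed h) < p1
  g3 : ∀ i j k, i ≠ j → ∀ (h1 : i ≠ k) (h2 : j ≠ k), cnt u p0 (star i) ≤ 9 →
    cnt u p0 (star j) ≤ 9 → ¬ (u (ed h1) < p1 ∧ u (ed h2) < p1)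
  g4 : ∀ i j k (h : i ≠ j), i ≠ k → x k = 2 * x j - x i → cnt u p0 (star i) ≤ 9 →
    cnt u p0 (star k) ≤ 9 → ¬ u (ed h) < p1
  g5 : ∀ S : Finset (Fin n), S.Nonempty → S.card ^ 3 ≤ n → cnt u p1 (ins S) < 4 * S.card
  g6 : ∀ S : Finset (Fin n), n < S.card ^ 3 → 10 * S.card ≤ n → S.card < cnt u p0 (btw S Sᶜ)
  g7 : ∀ A B : Finset (Fin n), Disjoint A B → n ≤ 10 * A.card → n ≤ 10 * B.card →
    n < cnt u p0 (btw A B)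

section det
open Classical
variable {n : ℕ} {x : Fin n → ℝ} {p0 p1 : ℝ} {u : Ed n → ℝ} {H : Set (Sym2 (Fin n))}

/-- neighbours -/
noncomputable def nb (H : Set (Sym2 (Fin n))) (i : Fin n) : Finset (Fin n) :=
  Finset.univ.filter (fun j => s(i, j) ∈ H)

lemma nb_card (_hd : ∀ e ∈ H, ¬ e.IsDiag) (i : Fin n) : degree H i = (nb H i).card := by
  unfold degree
  rw [← Set.ncard_coe_finset]
  symm
  refine Set.ncard_congr (fun j _ => s(i, j)) ?_ ?_ ?_
  · intro j hj; simp [nb] at hj; exact ⟨hj, by simp⟩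
  · intro a b _ _ hab; exact Sym2.congr_right.1 hab
  · rintro e ⟨he, hi⟩
    obtain ⟨j, rfl⟩ := hi
    exact ⟨j, by simpa [nb] using he, rfl⟩

lemma star_le (h0 : ∀ e : Ed n, u e < p0 → e.1 ∈ H) (i : Fin n) :
    cnt u p0 (star i) ≤ (nb H i).card := by
  unfold cnt
  rw [← Finset.card_image_of_injective _ Subtype.val_injective]
  refine (Finset.card_le_card (t := (nb H i).image (fun j => s(i, j))) ?_).trans Finset.card_image_le
  intro e he
  simp only [Finset.mem_image, Finset.mem_filter, star, Finset.mem_univ, true_and] at he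
  obtain ⟨e', ⟨hi, hu⟩, rfl⟩ := he
  obtain ⟨j, hj⟩ := hi
  rw [Finset.mem_image]
  refine ⟨j, ?_, hj.symm⟩
  simp only [nb, Finset.mem_filter, Finset.mem_univ, true_and]
  rw [← hj]; exact h0 _ hu

lemma btw_le (h0 : ∀ e : Ed n, u e < p0 → e.1 ∈ H) (A B : Finset (Fin n)) :
    cnt u p0 (btw A B) ≤ ∑ a ∈ A, (nb H a ∩ B).card := by
  unfold cnt
  rw [← Finset.card_image_of_injective _ Subtype.val_injective]
  refine (Finset.card_le_card (t := A.biUnion fun a => (nb H a ∩ B).image (fun j => s(a, j))) ?_).trans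
    (Finset.card_biUnion_le.trans (Finset.sum_le_sum fun a _ => Finset.card_image_le))
  intro e he
  simp only [Finset.mem_image, Finset.mem_filter, btw, Finset.mem_univ, true_and] at he
  obtain ⟨e', ⟨⟨a, ha, b, hb, hab⟩, hu⟩, rfl⟩ := he
  rw [Finset.mem_biUnion]
  refine ⟨a, ha, ?_⟩
  rw [Finset.mem_image]
  refine ⟨b, ?_, hab.symm⟩
  simp only [nb, Finset.mem_inter, Finset.mem_filter, Finset.mem_univ, true_and]
  rw [← hab]; exact ⟨h0 _ hu, hb⟩

lemma ins_ge (h1 : ∀ e ∈ H, ∃ h : ¬ e.IsDiag, u ⟨e, h⟩ < p1) (S : Finset (Fin n)) :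
    ∑ a ∈ S, (nb H a ∩ S).card ≤ 2 * cnt u p1 (ins S) := by
  rw [← Finset.card_sigma]
  unfold cnt
  rw [← Finset.card_image_of_injective _ Subtype.val_injective]
  set T := S.sigma fun a => nb H a ∩ S
  have hb := Finset.card_le_mul_card_image (f := fun q : (_ : Fin n) × Fin n => s(q.1, q.2)) T 2 ?_
  · refine hb.trans ?_
    gcongr
    intro e he
    rw [Finset.mem_image] at he
    obtain ⟨⟨a, b⟩, hq, rfl⟩ := he
    simp [T, nb] at hq
    obtain ⟨h, hu⟩ := h1 _ hq.2.1
    rw [Finset.mem_image]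
    refine ⟨⟨_, h⟩, ?_, rfl⟩
    simp [ins, hu, hq]
  · intro e he
    rw [Finset.mem_image] at he
    obtain ⟨⟨a, b⟩, hq, rfl⟩ := he
    refine (Finset.card_le_card (t := {⟨a, b⟩, ⟨b, a⟩}) ?_).trans Finset.card_le_two
    rintro ⟨c, d⟩ hcd
    simp only [Finset.mem_filter, Sym2.eq_iff] at hcd
    rcases hcd.2 with ⟨rfl, rfl⟩ | ⟨rfl, rfl⟩ <;> simp

lemma core (hx : Function.Injective x) (hg : Good x p0 p1 u)
    (h0 : ∀ e : Ed n, u e < p0 → e.1 ∈ H) (h1 : ∀ e ∈ H, ∃ h : ¬ e.IsDiag, u ⟨e, h⟩ < p1)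
    (hc : Cond x H) (w : Fin n → ℝ) (hw : Function.Injective w)
    (hwH : ∀ i j, s(i, j) ∈ H → |w i - w j| = |x i - x j|) (β : ℝ)
    (hR : n ≤ 10 * (Finset.univ.filter (fun i => w i - x i = β)).card) :
    ∀ i, w i - x i = β := by
  set R := Finset.univ.filter (fun i => w i - x i = β) with hRdef
  have hmR : ∀ i, i ∈ R ↔ w i - x i = β := by intro i; simp [hRdef]
  set S := Rᶜ with hS
  have hmS : ∀ i, i ∈ S ↔ w i - x i ≠ β := by intro i; rw [hS, Finset.mem_compl, hmR]
  have hd : ∀ e ∈ H, ¬ e.IsDiag := fun e he => (h1 e he).1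
  have hedge : ∀ i j, s(i, j) ∈ H → w i - x i = w j - x j ∨ w i + x i = w j + x j := by
    intro i j hij
    rcases abs_eq_abs.1 (hwH i j hij) with h | h
    · left; linarith
    · right; linarith
  have hsymm : ∀ i j, s(i, j) ∈ H → s(j, i) ∈ H := by
    intro i j h; rwa [Sym2.eq_swap]
  have hone : ∀ v ∈ S, (nb H v ∩ R).card ≤ 1 := by
    intro v hv
    rw [Finset.card_le_one]
    intro a ha b hb
    simp only [nb, Finset.mem_inter, Finset.mem_filter, Finset.mem_univ, true_and, hmR] at ha hb
    rw [hmS] at hv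
    have ea : w v + x v = w a + x a := (hedge v a ha.1).resolve_left (by rw [ha.2]; exact hv)
    have eb : w v + x v = w b + x b := (hedge v b hb.1).resolve_left (by rw [hb.2]; exact hv)
    apply hx
    linarith [ha.2, hb.2]
  have hsum : ∑ a ∈ S, (nb H a ∩ R).card ≤ S.card := by
    have := Finset.sum_le_card_nsmul S (fun a => (nb H a ∩ R).card) 1 hone
    simpa using this
  have hcnt : cnt u p0 (btw S R) ≤ S.card := (btw_le h0 S R).trans hsum
  have hSn : S.card ≤ n := by simpa using Finset.card_le_univ S
  have hs1 : 10 * S.card < n := by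
    by_contra hcon
    have := hg.g7 S R (by rw [hS]; exact disjoint_compl_left) (by omega) hR
    omega
  have hs2 : S.card ^ 3 ≤ n := by
    by_contra hcon
    have := hg.g6 S (by omega) hs1.le
    rw [hS, compl_compl, ← hS] at this
    omega
  have hlow2 : ∀ i j k, i ≠ j → s(i, k) ∈ H → s(j, k) ∈ H → cnt u p0 (star i) ≤ 9 →
      cnt u p0 (star j) ≤ 9 → False := by
    intro i j k hij hik hjk hi hj
    obtain ⟨a1, a2⟩ := h1 _ hik
    obtain ⟨b1, b2⟩ := h1 _ hjk
    exact hg.g3 i j k hij (by simpa using a1) (by simpa using b1) hi hj ⟨a2, b2⟩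
  have hSlow : ∀ i ∈ S, cnt u p0 (star i) ≤ 9 := by
    by_contra hcon
    push Not at hcon
    obtain ⟨i0, hi0, hi0'⟩ := hcon
    set S' := S.filter (fun i => 9 < cnt u p0 (star i)) with hS'
    have hne : S'.Nonempty := ⟨i0, by simp [hS', hi0, hi0']⟩
    have hle : S'.card ≤ S.card := Finset.card_le_card (Finset.filter_subset _ _)
    have h5 := hg.g5 S' hne ((Nat.pow_le_pow_left hle 3).trans hs2)
    have hge : ∀ v ∈ S', 8 ≤ (nb H v ∩ S').card := by
      intro v hv
      simp only [hS', Finset.mem_filter] at hv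
      have d1 := star_le h0 v
      have d2 := hone v hv.1
      set Lw := (nb H v).filter (fun j => cnt u p0 (star j) ≤ 9) with hLw
      have d3 : Lw.card ≤ 1 := by
        rw [Finset.card_le_one]
        intro a ha b hb
        simp only [hLw, nb, Finset.mem_filter, Finset.mem_univ, true_and] at ha hb
        by_contra hab
        exact hlow2 a b v hab (hsymm _ _ ha.1) (hsymm _ _ hb.1) ha.2 hb.2
      have hcov : nb H v ⊆ (nb H v ∩ R) ∪ (Lw ∪ (nb H v ∩ S')) := by
        intro j hj
        by_cases hjR : j ∈ R
        · simp [hj, hjR]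
        · by_cases hjl : cnt u p0 (star j) ≤ 9
          · simp only [Finset.mem_union, hLw, Finset.mem_filter]; right; left; exact ⟨hj, hjl⟩
          · simp only [Finset.mem_union]; right; right
            simp only [Finset.mem_inter, hS', Finset.mem_filter, hS, Finset.mem_compl]
            exact ⟨hj, hjR, by omega⟩
      have := Finset.card_le_card hcov
      have e1 := Finset.card_union_le (nb H v ∩ R) (Lw ∪ (nb H v ∩ S'))
      have e2 := Finset.card_union_le Lw (nb H v ∩ S')
      omega
    have h6 := Finset.card_nsmul_le_sum S' (fun a => (nb H a ∩ S').card) 8 hge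
    have h7 := ins_ge h1 S'
    rw [smul_eq_mul] at h6
    omega
  by_contra hcon
  push Not at hcon
  obtain ⟨a, ha⟩ := hcon
  have haS : a ∈ S := (hmS a).2 ha
  have hal := hSlow a haS
  have hnbR : nb H a ⊆ nb H a ∩ R := by
    intro v hv
    rw [Finset.mem_inter]
    refine ⟨hv, ?_⟩
    by_contra hvR
    have hvS : v ∈ S := by rw [hS, Finset.mem_compl]; exact hvR
    simp only [nb, Finset.mem_filter, Finset.mem_univ, true_and] at hv
    obtain ⟨a1, a2⟩ := h1 _ hv
    exact hg.g2 a v (by simpa using a1) hal (hSlow v hvS) a2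
  have hdeg1 : degree H a = 1 := by
    have e1 := hc.1 a
    have e2 := Finset.card_le_card hnbR
    have e3 := hone a haS
    have e4 := nb_card hd a
    omega
  have hnbne : (nb H a).Nonempty := by
    rw [← Finset.card_pos, ← nb_card hd]; omega
  obtain ⟨v, hv⟩ := hnbne
  have hvR := (Finset.mem_inter.1 (hnbR hv)).2
  rw [hmR] at hvR
  simp only [nb, Finset.mem_filter, Finset.mem_univ, true_and] at hv
  obtain ⟨a1, a2⟩ := h1 _ hv
  have hav : a ≠ v := by simpa using a1
  obtain ⟨_, l, hl⟩ := hc.2 a v hdeg1 hav hv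
  have hxav : x a ≠ x v := fun h => hav (hx h)
  have hla : l ≠ a := by
    rintro rfl
    apply hxav; linarith
  have ea : w a + x a = w v + x v := (hedge a v hv).resolve_left (by rw [hvR]; exact ha)
  by_cases hlR : w l - x l = β
  · apply hla; apply hw; linarith
  · exact hg.g4 a v l hav hla.symm hl hal (hSlow l ((hmS l).2 hlR)) a2

lemma large (hn : 100 ≤ n) (hg : Good x p0 p1 u)
    (h0 : ∀ e : Ed n, u e < p0 → e.1 ∈ H) (f g : Fin n → ℝ)
    (hfg : ∀ i j, s(i, j) ∈ H → f i = f j ∨ g i = g j) :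
    (∃ β, n ≤ 10 * (Finset.univ.filter (fun i => f i = β)).card) ∨
    (∃ β, n ≤ 10 * (Finset.univ.filter (fun i => g i = β)).card) := by
  by_contra hcon
  push Not at hcon
  obtain ⟨hf, hgg⟩ := hcon
  have conv : ∀ (B : Finset (Fin n)) (P : Fin n → Prop),
      {i ∈ (B : Set (Fin n)) | P i}.ncard = (B.filter P).card := by
    intro B P
    rw [← Set.ncard_coe_finset]; congr 1; ext i; simp
  obtain ⟨T, hT1, hT2⟩ := sep (Finset.univ : Finset (Fin n)) f ((n + 2) / 3) (n / 10)
    (fun c => by rw [conv]; have := hf c; omega) (by simp; omega)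
  rw [conv] at hT1 hT2
  set A := Finset.univ.filter (fun i => f i ∈ T) with hA
  set B := Finset.univ.filter (fun i => ¬ f i ∈ T) with hB
  have hAB : A.card + B.card = n := by
    rw [hA, hB, Finset.card_filter_add_card_filter_not]; simp
  obtain ⟨U, hU1, hU2⟩ := sep A g ((n + 9) / 10) (n / 10)
    (fun c => by
      rw [conv]
      have := hgg c
      have h2 : (A.filter (fun i => g i = c)).card ≤ (Finset.univ.filter (fun i => g i = c)).card :=
        Finset.card_le_card (Finset.filter_subset_filter _ (Finset.subset_univ _))
      omega) (by omega)
  rw [conv] at hU1 hU2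
  have hA2 : (A.filter (fun i => g i ∈ U)).card + (A.filter (fun i => ¬ g i ∈ U)).card = A.card :=
    Finset.card_filter_add_card_filter_not _
  have hB2 : (B.filter (fun i => g i ∈ U)).card + (B.filter (fun i => ¬ g i ∈ U)).card = B.card :=
    Finset.card_filter_add_card_filter_not _
  have no : ∀ X Y : Finset (Fin n), n ≤ 10 * X.card → n ≤ 10 * Y.card →
      (∀ i ∈ X, ∀ j ∈ Y, f i ≠ f j ∧ g i ≠ g j) → False := by
    intro X Y hX hY hXY
    have h7 := hg.g7 X Y (Finset.disjoint_left.2 fun i hi hj => (hXY i hi i hj).1 rfl) hX hY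
    have hb := btw_le h0 X Y
    have : ∑ a ∈ X, (nb H a ∩ Y).card = 0 := by
      refine Finset.sum_eq_zero fun a ha => ?_
      rw [Finset.card_eq_zero, Finset.eq_empty_iff_forall_notMem]
      intro j hj
      simp only [nb, Finset.mem_inter, Finset.mem_filter, Finset.mem_univ, true_and] at hj
      have := hXY a ha j hj.2
      rcases hfg a j hj.1 with h | h
      · exact this.1 h
      · exact this.2 h
    omega
  have hcase : n ≤ 10 * (B.filter (fun i => g i ∈ U)).card ∨
      n ≤ 10 * (B.filter (fun i => ¬ g i ∈ U)).card := by omega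
  rcases hcase with h | h
  · refine no (A.filter (fun i => ¬ g i ∈ U)) (B.filter (fun i => g i ∈ U)) (by omega) h ?_
    intro i hi j hj
    simp only [hA, hB, Finset.mem_filter, Finset.mem_univ, true_and] at hi hj
    exact ⟨fun e => hj.1 (e ▸ hi.1), fun e => hi.2 (e ▸ hj.2)⟩
  · refine no (A.filter (fun i => g i ∈ U)) (B.filter (fun i => ¬ g i ∈ U)) (by omega) h ?_
    intro i hi j hj
    simp only [hA, hB, Finset.mem_filter, Finset.mem_univ, true_and] at hi hj
    exact ⟨fun e => hj.1 (e ▸ hi.1), fun e => hj.2 (e ▸ hi.2)⟩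

lemma det (hn : 100 ≤ n) (hx : Function.Injective x) (hg : Good x p0 p1 u)
    (h0 : ∀ e : Ed n, u e < p0 → e.1 ∈ H) (h1 : ∀ e ∈ H, ∃ h : ¬ e.IsDiag, u ⟨e, h⟩ < p1)
    (hc : Cond x H) : Reconstructible x H Set.univ := by
  intro w hw hwH i _ j _
  rcases large hn hg h0 (fun i => w i - x i) (fun i => w i + x i) (by
    intro i j hij
    rcases abs_eq_abs.1 (hwH i j hij) with h | h
    · left; linarith
    · right; linarith) with ⟨β, hβ⟩ | ⟨β, hβ⟩
  · have := core hx hg h0 h1 hc w hw hwH β hβ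
    have hi := this i
    have hj := this j
    congr 1; linarith
  · have := core hx hg h0 h1 hc (fun i => - w i) (fun a b h => hw (by simpa using h)) (by
      intro i j hij
      rw [← hwH i j hij, ← abs_neg]; congr 1; ring) (-β) (by
        convert hβ using 4
        constructor <;> intro h <;> linarith)
    have hi := this i
    have hj := this j
    rw [← abs_neg]; congr 1; linarith

end det

lemma process {n : ℕ} (hn : 100 ≤ n) {x : Fin n → ℝ} (hx : Function.Injective x) {p0 p1 : ℝ}
    {u : Ed n → ℝ} (hg : Good x p0 p1 u) (σ : Fin (n.choose 2) ≃ Ed n)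
    (hu : StrictMono (u ∘ σ)) :
    ∃ τ : ℕ,
          IsLeast {t : ℕ | t ≤ n.choose 2 ∧
            (∀ u : Fin n, 1 ≤ degree (Gt σ t) u) ∧
            (∀ u v : Fin n, degree (Gt σ t) u = 1 → u ≠ v → s(u, v) ∈ Gt σ t →
              Secure x u v)} τ ∧
          Reconstructible x (Gt σ τ) Set.univ ∧
          ∀ t : ℕ, t < τ → ¬ Reconstructible x (Gt σ t) Set.univ := by
  classical
  have hdiag : ∀ t, ∀ e ∈ Gt σ t, ¬ e.IsDiag := by
    rintro t e ⟨s, _, rfl⟩; exact (σ s).2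
  -- any graph containing the p1 graph satisfies the condition
  have hcond : ∀ t, (∀ e : Ed n, u e < p1 → e.1 ∈ Gt σ t) → Cond x (Gt σ t) := by
    intro t ht
    have hd : ∀ i, 2 ≤ degree (Gt σ t) i := by
      intro i
      rw [nb_card (hdiag t)]
      exact (hg.g1 i).trans (star_le ht i)
    refine ⟨fun i => (by have := hd i; omega), fun i j h => ?_⟩
    have := hd i; omega
  have hN : Cond x (Gt σ (n.choose 2)) := by
    apply hcond
    intro e _
    exact ⟨σ.symm e, (σ.symm e).2, by simp⟩
  have hex : ∃ t, t ≤ n.choose 2 ∧ Cond x (Gt σ t) := ⟨_, le_rfl, hN⟩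
  have hmin : ∀ t, t < Nat.find hex → ¬ Cond x (Gt σ t) := by
    intro t ht hc
    have h2 := (Nat.find_spec hex).1
    exact Nat.find_min hex ht ⟨by omega, hc⟩
  have hτ := (Nat.find_spec hex).2
  refine ⟨Nat.find hex, ⟨Nat.find_spec hex, fun t ht => Nat.find_min' hex ht⟩, ?_, ?_⟩
  · refine det hn hx hg ?_ ?_ hτ
    · intro e he
      by_contra hcon
      obtain ⟨i, hi⟩ := hg.g0
      have h1 := hτ.1 i
      rw [nb_card (hdiag _), Nat.succ_le_iff, Finset.card_pos] at h1
      obtain ⟨j, hj⟩ := h1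
      simp only [nb, Finset.mem_filter, Finset.mem_univ, true_and] at hj
      obtain ⟨s, hs, hse⟩ := hj
      have hs2 : ¬ ((σ.symm e : Fin _) : ℕ) < Nat.find hex := by
        intro h; exact hcon ⟨σ.symm e, h, by simp⟩
      have hlt : s < σ.symm e := by
        rw [Fin.lt_def]; omega
      have h3 := hu hlt
      simp only [Function.comp, Equiv.apply_symm_apply] at h3
      refine hi (σ s) ?_ (h3.trans he)
      simp [star, hse]
    · rintro e ⟨s, hs, rfl⟩
      refine ⟨(σ s).2, ?_⟩
      by_contra hcon
      apply hmin s hs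
      apply hcond
      intro e he
      refine ⟨σ.symm e, ?_, by simp⟩
      by_contra hcon2
      have : s ≤ σ.symm e := by rw [Fin.le_def]; omega
      have h3 := hu.monotone this
      simp only [Function.comp, Equiv.apply_symm_apply] at h3
      exact hcon (lt_of_le_of_lt h3 he)
  · intro t ht
    exact nonrecon (by omega) x hx _ (hdiag t) (hmin t ht)

end R4

namespace R4
open MeasureTheory

lemma ub {Ω I : Type*} [MeasurableSpace Ω] [Fintype I] (μ : Measure Ω) [IsProbabilityMeasure μ]
    (B : Set Ω) (A : I → Set Ω) (b : I → ℝ) (h : ∀ i, μ.real (A i) ≤ b i) (hB : B ⊆ ⋃ i, A i) :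
    μ.real B ≤ ∑ i, b i :=
  (measureReal_mono hB).trans ((measureReal_iUnion_fintype_le A).trans
    (Finset.sum_le_sum fun i _ => h i))

lemma ub_cond {Ω : Type*} [MeasurableSpace Ω] (μ : Measure Ω) [IsProbabilityMeasure μ]
    (c : Prop) (A : Set Ω) (b : ℝ) (hb : 0 ≤ b) (h : c → μ.real A ≤ b) :
    μ.real {u | c ∧ u ∈ A} ≤ b := by
  by_cases hc : c
  · refine le_trans (measureReal_mono ?_) (h hc)
    intro u hu; exact hu.2
  · have : {u | c ∧ u ∈ A} = ∅ := by ext u; simp [hc]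
    rw [this]; simpa using hb

section cards
variable {n : ℕ}
open Classical

lemma star_card (i : Fin n) : (star i).card = n - 1 := by
  have h : (Finset.univ.erase i).card = n - 1 := by simp
  rw [← h]
  symm
  refine Finset.card_bij (fun j hj => ed (Ne.symm (Finset.ne_of_mem_erase hj))) ?_ ?_ ?_
  · intro j hj; simp [star, ed]
  · intro a ha b hb hab
    exact Sym2.congr_right.1 (congrArg Subtype.val hab)
  · rintro ⟨e, he⟩ hi
    simp only [star, Finset.mem_filter, Finset.mem_univ, true_and] at hi
    obtain ⟨j, rfl⟩ := hi
    refine ⟨j, ?_, rfl⟩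
    simp at he
    simp [Ne.symm he]

lemma star_union (i j : Fin n) (h : i ≠ j) : 2 * (n - 1) - 1 ≤ (star i ∪ star j).card := by
  have h1 := Finset.card_union_add_card_inter (star i) (star j)
  rw [star_card, star_card] at h1
  have h2 : (star i ∩ star j).card ≤ 1 := by
    rw [Finset.card_le_one]
    have : ∀ a ∈ star i ∩ star j, a = ed h := by
      intro a ha
      simp only [star, Finset.mem_inter, Finset.mem_filter, Finset.mem_univ, true_and] at ha
      exact Subtype.ext ((Sym2.mem_and_mem_iff h).1 ha)
    intro a ha b hb
    rw [this a ha, this b hb]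
  omega

lemma btw_card (A B : Finset (Fin n)) (h : Disjoint A B) : A.card * B.card ≤ (btw A B).card := by
  rw [← Finset.card_product]
  have hne : ∀ q : Fin n × Fin n, q ∈ A ×ˢ B → q.1 ≠ q.2 := by
    intro q hq he
    rw [Finset.mem_product] at hq
    exact Finset.disjoint_left.1 h hq.1 (he ▸ hq.2)
  rw [← Finset.card_attach]
  refine Finset.card_le_card_of_injOn (fun q => ed (hne q.1 q.2)) ?_ ?_
  · rintro ⟨⟨a, b⟩, hq⟩ _
    rw [Finset.mem_product] at hq
    simp only [btw, Finset.coe_filter, Finset.mem_univ, true_and]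
    exact ⟨a, hq.1, b, hq.2, rfl⟩
  · rintro ⟨⟨a, b⟩, hq⟩ _ ⟨⟨c, d⟩, hq'⟩ _ hab
    have := congrArg Subtype.val hab
    simp only [ed, Sym2.eq_iff] at this
    rw [Finset.mem_product] at hq hq'
    rcases this with ⟨rfl, rfl⟩ | ⟨rfl, rfl⟩
    · rfl
    · exact absurd hq'.2 (Finset.disjoint_left.1 h hq.1)

lemma ins_card (S : Finset (Fin n)) : (ins S).card ≤ S.card ^ 2 := by
  rw [← Finset.card_image_of_injective _ Subtype.val_injective, sq, ← Finset.card_product]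
  refine (Finset.card_le_card (t := (S ×ˢ S).image (fun q => s(q.1, q.2))) ?_).trans
    Finset.card_image_le
  intro e he
  rw [Finset.mem_image] at he
  obtain ⟨⟨e, he'⟩, h, rfl⟩ := he
  simp only [ins, Finset.mem_filter, Finset.mem_univ, true_and] at h
  rw [Finset.mem_image]
  induction e using Sym2.ind with
  | _ a b =>
    exact ⟨(a, b), Finset.mem_product.2 ⟨h a (by simp), h b (by simp)⟩, rfl⟩

end cards

section events
variable {n : ℕ} {p0 p1 : ℝ}

lemma low_one (F : Finset (Ed n)) (p : ℝ) (h0 : 0 ≤ p) (h1 : p ≤ 1) (k m : ℕ) (hm : m ≤ F.card) :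
    (lab (Ed n)).real {u | cnt u p F ≤ k} ≤ 10 ^ k * Real.exp (-(p * (9/10) * m)) := by
  have := prob_low ∅ F (by simp) p p (1/10) h0 h1 h0 h1 (by norm_num) (by norm_num) k
  refine le_trans (le_trans (measureReal_mono ?_) this) ?_
  · intro u hu; exact ⟨by simp, hu⟩
  · have hm' : (m : ℝ) ≤ F.card := by exact_mod_cast hm
    norm_num
    gcongr

lemma low_two (h0 : 0 ≤ p0) (h0' : p0 ≤ 1) (h1 : 0 ≤ p1) (h1' : p1 ≤ 1) (hn : 3 ≤ n)
    (i j : Fin n) (h : i ≠ j) (E : Finset (Ed n)) (hE : E.card ≤ 2) :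
    (lab (Ed n)).real {u | (∀ e ∈ E, u e < p1) ∧ cnt u p0 (star i) ≤ 9 ∧ cnt u p0 (star j) ≤ 9} ≤
      p1 ^ E.card * (10 ^ 18 * Real.exp (-(p0 * (9/10) * (2 * n - 5)))) := by
  classical
  set F := (star i ∪ star j) \ E with hF
  have := prob_low E F Finset.disjoint_sdiff p0 p1 (1/10) h0 h0' h1 h1' (by norm_num) (by norm_num) 18
  refine le_trans (le_trans (measureReal_mono ?_) this) ?_
  · rintro u ⟨a, b, c⟩
    refine ⟨a, ?_⟩
    have : F.filter (fun e => u e < p0) ⊆ (star i).filter (fun e => u e < p0) ∪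
        (star j).filter (fun e => u e < p0) := by
      intro e he
      simp only [hF, Finset.mem_filter, Finset.mem_sdiff, Finset.mem_union] at he ⊢
      tauto
    have h2 := (Finset.card_le_card this).trans (Finset.card_union_le _ _)
    unfold cnt at b c
    convert h2.trans (add_le_add b c) using 3
  · have h2 := star_union i j h
    have h3 : (star i ∪ star j).card - E.card ≤ F.card := Finset.le_card_sdiff _ _
    have h4 : 2 * n ≤ F.card + 5 := by omega
    have h5 : (2 * n - 5 : ℝ) ≤ F.card := by
      have : (2 * n : ℝ) ≤ F.card + 5 := by exact_mod_cast h4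
      linarith
    rw [mul_assoc]
    norm_num
    gcongr

lemma ev0 (h0 : 0 ≤ p0) (h0' : p0 < 1) (hn : 3 ≤ n) :
    (lab (Ed n)).real {u | ¬ ∃ i, ∀ e ∈ star i, ¬ u e < p0} ≤
      1 / (n * (1 - p0) ^ (n - 1)) + p0 / (1 - p0) := by
  have := second_moment (star (n := n)) (n - 1) (by omega) star_card
    (by intro i j h; convert star_union i j h using 2; ext e; simp) p0 h0 h0' (by simp; omega)
  simp only [Fintype.card_fin] at this
  convert this using 4 with u
  push Not
  rfl

lemma ev1 (h1 : 0 ≤ p1) (h1' : p1 ≤ 1) :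
    (lab (Ed n)).real {u | ¬ ∀ i, 2 ≤ cnt u p1 (star i)} ≤
      n * (10 * Real.exp (-(p1 * (9/10) * (n - 1 : ℕ)))) := by
  have := ub (lab (Ed n)) {u | ¬ ∀ i, 2 ≤ cnt u p1 (star i)} (fun i => {u | cnt u p1 (star i) ≤ 1})
    _ (fun i => low_one (star i) p1 h1 h1' 1 (n - 1) (star_card i).ge) (by
      intro u hu
      simp only [Set.mem_setOf_eq] at hu
      push Not at hu
      obtain ⟨i, hi⟩ := hu
      exact Set.mem_iUnion.2 ⟨i, Nat.lt_succ_iff.1 hi⟩)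
  simpa using this

lemma ev2 (h0 : 0 ≤ p0) (h0' : p0 ≤ 1) (h1 : 0 ≤ p1) (h1' : p1 ≤ 1) (hn : 3 ≤ n) :
    (lab (Ed n)).real {u | ¬ ∀ i j (h : i ≠ j), cnt u p0 (star i) ≤ 9 → cnt u p0 (star j) ≤ 9 →
      ¬ u (ed h) < p1} ≤
      n ^ 2 * (p1 * (10 ^ 18 * Real.exp (-(p0 * (9/10) * (2 * n - 5))))) := by
  classical
  have := ub (lab (Ed n)) (fun q : Fin n × Fin n => {u | q.1 ≠ q.2 ∧ u ∈ {u : Ed n → ℝ |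
    ∀ h : q.1 ≠ q.2, u (ed h) < p1 ∧ cnt u p0 (star q.1) ≤ 9 ∧ cnt u p0 (star q.2) ≤ 9}})
    (fun _ => p1 * (10 ^ 18 * Real.exp (-(p0 * (9/10) * (2 * n - 5))))) (fun q => by
      apply ub_cond _ _ _ _ (by positivity)
      intro h
      have := low_two h0 h0' h1 h1' hn q.1 q.2 h {ed h} (by simp)
      rw [Finset.card_singleton, pow_one] at this
      refine le_trans (measureReal_mono ?_) this
      intro u hu
      simp only [Set.mem_setOf_eq] at hu
      exact ⟨by simpa using (hu h).1, (hu h).2⟩)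
    (B := {u | ¬ ∀ i j (h : i ≠ j), cnt u p0 (star i) ≤ 9 → cnt u p0 (star j) ≤ 9 →
      ¬ u (ed h) < p1}) (by
      intro u hu
      simp only [Set.mem_setOf_eq] at hu
      push Not at hu
      obtain ⟨i, j, h, a, b, c⟩ := hu
      exact Set.mem_iUnion.2 ⟨(i, j), h, fun _ => ⟨c, a, b⟩⟩)
  refine this.trans (le_of_eq ?_)
  simp; left; ring

lemma ev4 (x : Fin n → ℝ) (hx : Function.Injective x) (h0 : 0 ≤ p0) (h0' : p0 ≤ 1)
    (h1 : 0 ≤ p1) (h1' : p1 ≤ 1) (hn : 3 ≤ n) :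
    (lab (Ed n)).real {u | ¬ ∀ i j k (h : i ≠ j), i ≠ k → x k = 2 * x j - x i →
      cnt u p0 (star i) ≤ 9 → cnt u p0 (star k) ≤ 9 → ¬ u (ed h) < p1} ≤
      n ^ 2 * (p1 * (10 ^ 18 * Real.exp (-(p0 * (9/10) * (2 * n - 5))))) := by
  classical
  have := ub (lab (Ed n)) (fun q : Fin n × Fin n => {u | (q.1 ≠ q.2 ∧
      ∃ k, q.1 ≠ k ∧ x k = 2 * x q.2 - x q.1) ∧ u ∈ {u : Ed n → ℝ |
    ∀ h : q.1 ≠ q.2, u (ed h) < p1 ∧ cnt u p0 (star q.1) ≤ 9 ∧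
      ∀ k, x k = 2 * x q.2 - x q.1 → cnt u p0 (star k) ≤ 9}})
    (fun _ => p1 * (10 ^ 18 * Real.exp (-(p0 * (9/10) * (2 * n - 5))))) (fun q => by
      apply ub_cond _ _ _ _ (by positivity)
      rintro ⟨h, k, hk, hxk⟩
      have := low_two h0 h0' h1 h1' hn q.1 k hk {ed h} (by simp)
      rw [Finset.card_singleton, pow_one] at this
      refine le_trans (measureReal_mono ?_) this
      intro u hu
      simp only [Set.mem_setOf_eq] at hu
      exact ⟨by simpa using (hu h).1, (hu h).2.1, (hu h).2.2 k hxk⟩)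
    (B := {u | ¬ ∀ i j k (h : i ≠ j), i ≠ k → x k = 2 * x j - x i →
      cnt u p0 (star i) ≤ 9 → cnt u p0 (star k) ≤ 9 → ¬ u (ed h) < p1}) (by
      intro u hu
      simp only [Set.mem_setOf_eq] at hu
      push Not at hu
      obtain ⟨i, j, k, h, hik, hxk, a, b, c⟩ := hu
      refine Set.mem_iUnion.2 ⟨(i, j), ⟨h, k, hik, hxk⟩, fun _ => ⟨c, a, fun k' hk' => ?_⟩⟩
      have : k' = k := hx (by rw [hk', hxk])
      rw [this]; exact b)
  refine this.trans (le_of_eq ?_)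
  simp; left; ring

lemma ev3 (h0 : 0 ≤ p0) (h0' : p0 ≤ 1) (h1 : 0 ≤ p1) (h1' : p1 ≤ 1) (hn : 3 ≤ n) :
    (lab (Ed n)).real {u | ¬ ∀ i j k, i ≠ j → ∀ (h1 : i ≠ k) (h2 : j ≠ k),
      cnt u p0 (star i) ≤ 9 → cnt u p0 (star j) ≤ 9 → ¬ (u (ed h1) < p1 ∧ u (ed h2) < p1)} ≤
      n ^ 3 * (p1 ^ 2 * (10 ^ 18 * Real.exp (-(p0 * (9/10) * (2 * n - 5))))) := by
  classical
  have := ub (lab (Ed n)) (fun q : Fin n × Fin n × Fin n => {u | (q.1 ≠ q.2.1 ∧ q.1 ≠ q.2.2 ∧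
      q.2.1 ≠ q.2.2) ∧ u ∈ {u : Ed n → ℝ |
    ∀ (h : q.1 ≠ q.2.2) (h' : q.2.1 ≠ q.2.2), (u (ed h) < p1 ∧ u (ed h') < p1) ∧
      cnt u p0 (star q.1) ≤ 9 ∧ cnt u p0 (star q.2.1) ≤ 9}})
    (fun _ => p1 ^ 2 * (10 ^ 18 * Real.exp (-(p0 * (9/10) * (2 * n - 5))))) (fun q => by
      apply ub_cond _ _ _ _ (by positivity)
      rintro ⟨hij, h, h'⟩
      have hne : ed h ≠ ed h' := by
        intro he
        exact hij (Sym2.congr_left.1 (congrArg Subtype.val he))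
      have hc2 : ({ed h, ed h'} : Finset (Ed n)).card = 2 := Finset.card_pair hne
      have := low_two h0 h0' h1 h1' hn q.1 q.2.1 hij {ed h, ed h'} hc2.le
      rw [hc2] at this
      refine le_trans (measureReal_mono ?_) this
      intro u hu
      simp only [Set.mem_setOf_eq] at hu
      exact ⟨by simpa using (hu h h').1, (hu h h').2⟩)
    (B := {u | ¬ ∀ i j k, i ≠ j → ∀ (h1 : i ≠ k) (h2 : j ≠ k),
      cnt u p0 (star i) ≤ 9 → cnt u p0 (star j) ≤ 9 → ¬ (u (ed h1) < p1 ∧ u (ed h2) < p1)}) (by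
      intro u hu
      simp only [Set.mem_setOf_eq] at hu
      push Not at hu
      obtain ⟨i, j, k, h, hik, hjk, a, b, c⟩ := hu
      exact Set.mem_iUnion.2 ⟨(i, j, k), ⟨h, hik, hjk⟩, fun _ _ => ⟨c, a, b⟩⟩)
  refine this.trans (le_of_eq ?_)
  simp; left; ring

lemma sum_pow (r : ℝ) : ∑ S : Finset (Fin n), r ^ S.card = (1 + r) ^ n := by
  have := Fintype.sum_pow_mul_eq_add_pow (Fin n) r 1
  simp at this
  rw [this, add_comm]

lemma one_add_pow_le (r : ℝ) (hr : 0 ≤ r) : (1 + r) ^ n ≤ Real.exp (n * r) := by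
  rw [Real.exp_nat_mul]
  apply pow_le_pow_left₀ (by linarith)
  have := Real.add_one_le_exp r; linarith

lemma ev5 (h1 : 0 ≤ p1) (h1' : p1 ≤ 1) (y : ℝ) (hy : 1 ≤ y) (hyn : y ^ 3 = n) :
    (lab (Ed n)).real {u | ¬ ∀ S : Finset (Fin n), S.Nonempty → S.card ^ 3 ≤ n →
      cnt u p1 (ins S) < 4 * S.card} ≤
      Real.exp (n * ((y⁻¹) ^ 4 * Real.exp (p1 * y ^ 2))) - 1 := by
  classical
  set r := (y⁻¹) ^ 4 * Real.exp (p1 * y ^ 2) with hr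
  have hr0 : 0 ≤ r := by positivity
  have := ub (lab (Ed n)) (fun S : Finset (Fin n) => {u | (S.Nonempty ∧ S.card ^ 3 ≤ n) ∧
      u ∈ {u : Ed n → ℝ | 4 * S.card ≤ cnt u p1 (ins S)}})
    (fun S => r ^ S.card - if S = ∅ then 1 else 0) (fun S => by
      apply ub_cond _ _ _ _
      · split_ifs with hS
        · simp [hS]
        · simp only [sub_zero]; positivity
      rintro ⟨hS, hc⟩
      simp only [hS.ne_empty, if_false, sub_zero]
      refine (prob_high (ins S) p1 y h1 h1' hy (4 * S.card)).trans ?_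
      rw [hr, mul_pow, ← pow_mul, ← Real.exp_nat_mul]
      have hsy : (S.card : ℝ) ≤ y := by
        have : (S.card : ℝ) ^ 3 ≤ y ^ 3 := by rw [hyn]; exact_mod_cast hc
        exact le_of_pow_le_pow_left₀ (by norm_num) (by linarith) this
      have hic : ((ins S).card : ℝ) ≤ S.card ^ 2 := by exact_mod_cast ins_card S
      have : p1 * y * (ins S).card ≤ S.card * (p1 * y ^ 2) := by
        calc p1 * y * (ins S).card ≤ p1 * y * (S.card ^ 2) := by gcongr
          _ = p1 * y * S.card * S.card := by ring
          _ ≤ p1 * y * S.card * y := by gcongr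
          _ = _ := by ring
      gcongr)
    (B := {u | ¬ ∀ S : Finset (Fin n), S.Nonempty → S.card ^ 3 ≤ n →
      cnt u p1 (ins S) < 4 * S.card}) (by
      intro u hu
      simp only [Set.mem_setOf_eq] at hu
      push Not at hu
      obtain ⟨S, h, hc, a⟩ := hu
      exact Set.mem_iUnion.2 ⟨S, ⟨h, hc⟩, a⟩)
  refine this.trans ?_
  rw [Finset.sum_sub_distrib, sum_pow]
  simp only [Finset.sum_ite_eq', Finset.mem_univ, if_true]
  linarith [one_add_pow_le (n := n) r hr0]

lemma ev6 (h0 : 0 ≤ p0) (h0' : p0 ≤ 1) (y : ℝ) (hy : 1 ≤ y) (hyn : y ^ 3 = n) :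
    (lab (Ed n)).real {u | ¬ ∀ S : Finset (Fin n), n < S.card ^ 3 → 10 * S.card ≤ n →
      S.card < cnt u p0 (btw S Sᶜ)} ≤
      Real.exp (-y) * Real.exp (n * (Real.exp 1 * (10 * Real.exp (-(p0 * (81/100) * n))))) := by
  classical
  set r := Real.exp 1 * (10 * Real.exp (-(p0 * (81/100) * n))) with hr
  have hr0 : 0 ≤ r := by positivity
  have := ub (lab (Ed n)) (fun S : Finset (Fin n) => {u | (n < S.card ^ 3 ∧ 10 * S.card ≤ n) ∧
      u ∈ {u : Ed n → ℝ | cnt u p0 (btw S Sᶜ) ≤ S.card}})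
    (fun S => Real.exp (-y) * r ^ S.card) (fun S => by
      apply ub_cond _ _ _ _ (by positivity)
      rintro ⟨hS, hc⟩
      refine (low_one (btw S Sᶜ) p0 h0 h0' S.card _ (btw_card S Sᶜ disjoint_compl_right)).trans ?_
      rw [hr, mul_pow, mul_pow, ← Real.exp_nat_mul, ← Real.exp_nat_mul]
      have hsy : y ≤ (S.card : ℝ) := by
        have : y ^ 3 ≤ (S.card : ℝ) ^ 3 := by rw [hyn]; exact_mod_cast hS.le
        exact le_of_pow_le_pow_left₀ (by norm_num) (by positivity) this
      have hcc : (9 * n : ℝ) / 10 ≤ (Sᶜ.card : ℝ) := by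
        have e1 : S.card + Sᶜ.card = n := by simpa using Finset.card_add_card_compl S
        have e2 : 9 * n ≤ 10 * Sᶜ.card := by omega
        have e3 : (9 * n : ℝ) ≤ 10 * Sᶜ.card := by exact_mod_cast e2
        linarith
      have e1 : S.card * (p0 * (81/100) * n) ≤ p0 * (9/10) * (S.card * Sᶜ.card : ℕ) := by
        push_cast
        calc S.card * (p0 * (81/100) * n) = p0 * (9/10) * (S.card * (9 * n / 10)) := by ring
          _ ≤ _ := by gcongr
      have e2 : (1:ℝ) ≤ Real.exp (-y) * Real.exp (S.card * 1) := by
        rw [← Real.exp_add]; apply Real.one_le_exp; linarith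
      calc 10 ^ S.card * Real.exp (-(p0 * (9/10) * (S.card * Sᶜ.card : ℕ)))
          ≤ 10 ^ S.card * Real.exp (S.card * -(p0 * (81/100) * n)) := by
            gcongr; linarith
        _ = 1 * (10 ^ S.card * Real.exp (S.card * -(p0 * (81/100) * n))) := by ring
        _ ≤ (Real.exp (-y) * Real.exp (S.card * 1)) *
            (10 ^ S.card * Real.exp (S.card * -(p0 * (81/100) * n))) := by gcongr
        _ = _ := by ring)
    (B := {u | ¬ ∀ S : Finset (Fin n), n < S.card ^ 3 → 10 * S.card ≤ n →
      S.card < cnt u p0 (btw S Sᶜ)}) (by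
      intro u hu
      simp only [Set.mem_setOf_eq] at hu
      push Not at hu
      obtain ⟨S, h, hc, a⟩ := hu
      exact Set.mem_iUnion.2 ⟨S, ⟨h, hc⟩, a⟩)
  refine this.trans ?_
  rw [← Finset.mul_sum, sum_pow]
  gcongr
  exact one_add_pow_le r hr0

lemma ev7 (h0 : 0 ≤ p0) (h0' : p0 ≤ 1) :
    (lab (Ed n)).real {u | ¬ ∀ A B : Finset (Fin n), Disjoint A B → n ≤ 10 * A.card →
      n ≤ 10 * B.card → n < cnt u p0 (btw A B)} ≤
      (40 * Real.exp (-(p0 * (9/1000) * n))) ^ n := by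
  classical
  have := ub (lab (Ed n)) (fun q : Finset (Fin n) × Finset (Fin n) =>
      {u | (Disjoint q.1 q.2 ∧ n ≤ 10 * q.1.card ∧ n ≤ 10 * q.2.card) ∧
      u ∈ {u : Ed n → ℝ | cnt u p0 (btw q.1 q.2) ≤ n}})
    (fun q => (10 * Real.exp (-(p0 * (9/1000) * n))) ^ n) (fun q => by
      apply ub_cond _ _ _ _ (by positivity)
      rintro ⟨hd, hA, hB⟩
      refine (low_one (btw q.1 q.2) p0 h0 h0' n _ (btw_card q.1 q.2 hd)).trans ?_
      rw [mul_pow, ← Real.exp_nat_mul]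
      have e1 : (n : ℝ) / 10 ≤ q.1.card := by
        have : (n : ℝ) ≤ 10 * q.1.card := by exact_mod_cast hA
        linarith
      have e2 : (n : ℝ) / 10 ≤ q.2.card := by
        have : (n : ℝ) ≤ 10 * q.2.card := by exact_mod_cast hB
        linarith
      have e3 : n * (p0 * (9/1000) * n) ≤ p0 * (9/10) * (q.1.card * q.2.card : ℕ) := by
        push_cast
        calc n * (p0 * (9/1000) * n) = p0 * (9/10) * ((n / 10) * (n / 10)) := by ring
          _ ≤ _ := by gcongr
      gcongr
      linarith)
    (B := {u | ¬ ∀ A B : Finset (Fin n), Disjoint A B → n ≤ 10 * A.card →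
      n ≤ 10 * B.card → n < cnt u p0 (btw A B)}) (by
      intro u hu
      simp only [Set.mem_setOf_eq] at hu
      push Not at hu
      obtain ⟨A, B, h, hA, hB, a⟩ := hu
      exact Set.mem_iUnion.2 ⟨(A, B), ⟨h, hA, hB⟩, a⟩)
  refine this.trans (le_of_eq ?_)
  simp only [Finset.sum_const, Finset.card_univ, Fintype.card_prod, Fintype.card_finset,
    Fintype.card_fin, nsmul_eq_mul]
  push_cast
  rw [← mul_pow, ← mul_pow]
  congr 1; ring

lemma bad_le (x : Fin n → ℝ) (hx : Function.Injective x) (h0 : 0 ≤ p0) (h0' : p0 < 1)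
    (h1 : 0 ≤ p1) (h1' : p1 ≤ 1) (hn : 3 ≤ n) (y : ℝ) (hy : 1 ≤ y) (hyn : y ^ 3 = n) :
    (lab (Ed n)).real {u | ¬ Good x p0 p1 u} ≤
      (1 / (n * (1 - p0) ^ (n - 1)) + p0 / (1 - p0)) +
      n * (10 * Real.exp (-(p1 * (9/10) * (n - 1 : ℕ)))) +
      n ^ 2 * (p1 * (10 ^ 18 * Real.exp (-(p0 * (9/10) * (2 * n - 5))))) +
      n ^ 3 * (p1 ^ 2 * (10 ^ 18 * Real.exp (-(p0 * (9/10) * (2 * n - 5))))) +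
      n ^ 2 * (p1 * (10 ^ 18 * Real.exp (-(p0 * (9/10) * (2 * n - 5))))) +
      (Real.exp (n * ((y⁻¹) ^ 4 * Real.exp (p1 * y ^ 2))) - 1) +
      Real.exp (-y) * Real.exp (n * (Real.exp 1 * (10 * Real.exp (-(p0 * (81/100) * n))))) +
      (40 * Real.exp (-(p0 * (9/1000) * n))) ^ n := by
  refine le_trans ?_ (add_le_add (add_le_add (add_le_add (add_le_add (add_le_add (add_le_add
    (add_le_add (ev0 h0 h0' hn) (ev1 h1 h1')) (ev2 h0 h0'.le h1 h1' hn))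
    (ev3 h0 h0'.le h1 h1' hn)) (ev4 x hx h0 h0'.le h1 h1' hn)) (ev5 h1 h1' y hy hyn))
    (ev6 h0 h0'.le y hy hyn)) (ev7 h0 h0'.le))
  refine le_trans ?_ (le_trans (measureReal_union_le _ _) (add_le_add_left (
    le_trans (measureReal_union_le _ _) (add_le_add_left (
    le_trans (measureReal_union_le _ _) (add_le_add_left (
    le_trans (measureReal_union_le _ _) (add_le_add_left (
    le_trans (measureReal_union_le _ _) (add_le_add_left (
    le_trans (measureReal_union_le _ _) (add_le_add_left (
    measureReal_union_le _ _) _)) _)) _)) _)) _)) _))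
  refine measureReal_mono ?_
  intro u hu
  by_contra hcon
  apply hu
  simp only [Set.mem_union, not_or, Set.mem_setOf_eq, not_not] at hcon
  obtain ⟨⟨⟨⟨⟨⟨⟨a, b⟩, c⟩, d⟩, e⟩, f⟩, g⟩, h⟩ := hcon
  exact ⟨a, b, c, d, e, f, g, h⟩

end events
end R4

namespace R4
open Filter Topology Real

/-- the total bound as a function of L -/
noncomputable def bnd (L : ℝ) : ℝ :=
  (exp (-(L/20)) + 2 * (L * exp (-L))) + 10 * exp (-(7/20 * L)) +
  3 * 10^18 * (L ^ 1 * exp (-(43/200 * L))) + 9 * 10^18 * (L^2 * exp (-(43/200 * L))) +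
  3 * 10^18 * (L ^ 1 * exp (-(43/200 * L))) +
  (exp (exp (3 * (L * exp (-(1/3 * L)))) * exp (-(1/3 * L))) - 1) +
  exp (-(exp (1/3 * L)) * (1 - 10 * exp 1 * exp (-(1/3 - 271/1000) * L))) +
  40 * exp (-(81/10000 * L))

lemma tpe (k : ℕ) (c : ℝ) (hc : 0 < c) :
    Tendsto (fun L : ℝ => L ^ k * exp (-(c * L))) atTop (𝓝 0) := by
  have h := (tendsto_pow_mul_exp_neg_atTop_nhds_zero k).comp
    (tendsto_id.const_mul_atTop hc)
  have h2 := h.const_mul ((c⁻¹)^k)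
  rw [mul_zero] at h2
  refine h2.congr fun L => ?_
  simp only [Function.comp, id, mul_pow]
  rw [← mul_assoc, ← mul_assoc, ← mul_pow, inv_mul_cancel₀ hc.ne', one_pow, one_mul]

lemma te (c : ℝ) (hc : 0 < c) :
    Tendsto (fun L : ℝ => exp (-(c * L))) atTop (𝓝 0) := by
  simpa using tpe 0 c hc

lemma te1 (c : ℝ) (hc : 0 < c) :
    Tendsto (fun L : ℝ => L * exp (-(c * L))) atTop (𝓝 0) := by
  simpa using tpe 1 c hc

lemma bnd_tendsto : Tendsto bnd atTop (𝓝 0) := by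
  have a0 : Tendsto (fun L : ℝ => exp (-(L/20))) atTop (𝓝 0) := by
    refine (te (1/20) (by norm_num)).congr fun L => ?_
    congr 1; ring
  have a1 : Tendsto (fun L : ℝ => L * exp (-L)) atTop (𝓝 0) := by
    simpa using te1 1 one_pos
  have a5 : Tendsto (fun L : ℝ => exp (exp (3 * (L * exp (-(1/3 * L)))) * exp (-(1/3 * L))) - 1)
      atTop (𝓝 0) := by
    have b := ((te1 (1/3) (by norm_num)).const_mul 3).rexp
    have c := ((b.mul (te (1/3) (by norm_num))).rexp).sub_const 1
    simpa using c
  have a6 : Tendsto (fun L : ℝ => exp (-(exp (1/3 * L)) *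
      (1 - 10 * exp 1 * exp (-(1/3 - 271/1000) * L)))) atTop (𝓝 0) := by
    apply tendsto_exp_atBot.comp
    have b : Tendsto (fun L : ℝ => (1 - 10 * exp 1 * exp (-(1/3 - 271/1000) * L))) atTop (𝓝 1) := by
      have := ((te (1/3 - 271/1000) (by norm_num)).const_mul (10 * exp 1)).const_sub 1
      rw [mul_zero, sub_zero] at this
      exact this.congr fun L => by rw [neg_mul]
    have c : Tendsto (fun L : ℝ => -(exp (1/3 * L))) atTop atBot :=
      tendsto_neg_atTop_atBot.comp (tendsto_exp_atTop.comp
        (tendsto_id.const_mul_atTop (by norm_num : (0:ℝ) < 1/3)))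
    exact c.atBot_mul_pos one_pos b
  have := ((((((((a0.add (a1.const_mul 2)).add ((te (7/20) (by norm_num)).const_mul 10)).add
    ((tpe 1 (43/200) (by norm_num)).const_mul (3*10^18))).add
    ((tpe 2 (43/200) (by norm_num)).const_mul (9*10^18))).add
    ((tpe 1 (43/200) (by norm_num)).const_mul (3*10^18))).add a5).add a6).add
    ((te (81/10000) (by norm_num)).const_mul 40))
  simp only [mul_zero, add_zero] at this
  exact this

lemma bound_le (n : ℕ) (hn : 100 ≤ n) (L p0 p1 y : ℝ) (hL : L = log n)
    (hp0 : p0 = 9/10 * L / n) (hp1 : p1 = 3 * L / n) (hy : y = exp (1/3 * L)) (h0 : p0 ≤ 1/20)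
    (h7 : 40 * exp (-(81/10000 * L)) ≤ 1) :
      (1 / (n * (1 - p0) ^ (n - 1)) + p0 / (1 - p0)) +
      n * (10 * Real.exp (-(p1 * (9/10) * (n - 1 : ℕ)))) +
      n ^ 2 * (p1 * (10 ^ 18 * Real.exp (-(p0 * (9/10) * (2 * n - 5))))) +
      n ^ 3 * (p1 ^ 2 * (10 ^ 18 * Real.exp (-(p0 * (9/10) * (2 * n - 5))))) +
      n ^ 2 * (p1 * (10 ^ 18 * Real.exp (-(p0 * (9/10) * (2 * n - 5))))) +
      (Real.exp (n * ((y⁻¹) ^ 4 * Real.exp (p1 * y ^ 2))) - 1) +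
      Real.exp (-y) * Real.exp (n * (Real.exp 1 * (10 * Real.exp (-(p0 * (81/100) * n))))) +
      (40 * Real.exp (-(p0 * (9/1000) * n))) ^ n ≤ bnd L := by
  have hN : (100 : ℝ) ≤ n := by exact_mod_cast hn
  have hN0 : (0 : ℝ) < n := by linarith
  have hnL : (n : ℝ) = exp L := by rw [hL, exp_log hN0]
  have hL0 : 0 ≤ L := by rw [hL]; exact log_nonneg (by linarith)
  have hp0n : p0 * n = 9/10 * L := by rw [hp0]; field_simp
  have hp1n : p1 * n = 3 * L := by rw [hp1]; field_simp
  have hp00 : 0 ≤ p0 := by rw [hp0]; positivity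
  have hp10 : 0 ≤ p1 := by rw [hp1]; positivity
  have hcast : ((n - 1 : ℕ) : ℝ) = n - 1 := by push_cast [Nat.cast_sub (by omega : 1 ≤ n)]; ring
  have hein : exp (-L) * n = 1 := by rw [hnL, ← exp_add]; simp
  unfold bnd
  -- K bound
  have hK : exp (-(p0 * (9/10) * (2 * n - 5))) ≤ exp (-(43/200 * L)) * exp (-L) := by
    rw [← exp_add]; apply exp_le_exp.2
    nlinarith
  have c2 : n ^ 2 * (p1 * (10 ^ 18 * Real.exp (-(p0 * (9/10) * (2 * n - 5))))) ≤
      3 * 10^18 * (L ^ 1 * exp (-(43/200 * L))) := by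
    calc (n:ℝ) ^ 2 * (p1 * (10 ^ 18 * Real.exp (-(p0 * (9/10) * (2 * n - 5)))))
        ≤ n ^ 2 * (p1 * (10 ^ 18 * (exp (-(43/200 * L)) * exp (-L)))) := by gcongr
      _ = (p1 * n) * 10^18 * exp (-(43/200 * L)) * (exp (-L) * n) := by ring
      _ = _ := by rw [hp1n, hein]; ring
  have c3 : n ^ 3 * (p1 ^ 2 * (10 ^ 18 * Real.exp (-(p0 * (9/10) * (2 * n - 5))))) ≤
      9 * 10^18 * (L ^ 2 * exp (-(43/200 * L))) := by
    calc (n:ℝ) ^ 3 * (p1 ^ 2 * (10 ^ 18 * Real.exp (-(p0 * (9/10) * (2 * n - 5)))))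
        ≤ n ^ 3 * (p1 ^ 2 * (10 ^ 18 * (exp (-(43/200 * L)) * exp (-L)))) := by gcongr
      _ = (p1 * n) ^ 2 * 10^18 * exp (-(43/200 * L)) * (exp (-L) * n) := by ring
      _ = _ := by rw [hp1n, hein]; ring
  have c1 : n * (10 * Real.exp (-(p1 * (9/10) * (n - 1 : ℕ)))) ≤ 10 * exp (-(7/20 * L)) := by
    rw [hcast]
    have : exp (-(p1 * (9/10) * (n - 1))) ≤ exp (-(7/20 * L)) * exp (-L) := by
      rw [← exp_add]; apply exp_le_exp.2
      nlinarith
    calc (n:ℝ) * (10 * Real.exp (-(p1 * (9/10) * (n - 1))))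
        ≤ n * (10 * (exp (-(7/20 * L)) * exp (-L))) := by gcongr
      _ = 10 * exp (-(7/20 * L)) * (exp (-L) * n) := by ring
      _ = _ := by rw [hein, mul_one]
  have c0 : 1 / (n * (1 - p0) ^ (n - 1)) + p0 / (1 - p0) ≤ exp (-(L/20)) + 2 * (L * exp (-L)) := by
    have d1 : 0 < 1 - p0 := by linarith
    apply add_le_add
    · have e1 : exp (-(20/19 * p0)) ≤ 1 - p0 := by
        have f1 : 1 + 20/19 * p0 ≤ exp (20/19 * p0) := by
          have := add_one_le_exp (20/19 * p0); linarith
        rw [exp_neg, inv_le_comm₀ (exp_pos _) d1]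
        refine le_trans ?_ f1
        rw [inv_le_iff_one_le_mul₀ d1]
        nlinarith
      have e2 : exp (-(19/20 * L)) ≤ (1 - p0) ^ (n - 1) := by
        refine le_trans ?_ (pow_le_pow_left₀ (exp_pos _).le e1 (n-1))
        rw [← exp_nat_mul, hcast]
        apply exp_le_exp.2
        nlinarith
      have e3 : exp (L/20) ≤ n * (1 - p0) ^ (n - 1) := by
        calc exp (L/20) = n * exp (-(19/20 * L)) := by rw [hnL, ← exp_add]; congr 1; ring
          _ ≤ _ := by gcongr
      rw [exp_neg, one_div]
      exact inv_anti₀ (exp_pos _) e3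
    · have : p0 = 9/10 * (L * exp (-L)) := by
        rw [hp0, hnL, exp_neg]; ring
      rw [div_le_iff₀ d1]
      nlinarith
  have c5 : n * ((y⁻¹) ^ 4 * Real.exp (p1 * y ^ 2)) =
      exp (3 * (L * exp (-(1/3 * L)))) * exp (-(1/3 * L)) := by
    have e1 : p1 * y ^ 2 = 3 * (L * exp (-(1/3 * L))) := by
      rw [hp1, hy, hnL, ← exp_nat_mul, div_eq_mul_inv, ← exp_neg]
      rw [mul_assoc (3 * L), ← exp_add, mul_assoc 3 L]
      congr 3; push_cast; ring
    have e2 : n * (y⁻¹) ^ 4 = exp (-(1/3 * L)) := by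
      rw [hy, hnL, ← exp_neg, ← exp_nat_mul, ← exp_add]
      congr 1; push_cast; ring
    rw [e1, ← mul_assoc, e2, mul_comm]
  have c6 : Real.exp (-y) * Real.exp (n * (Real.exp 1 * (10 * Real.exp (-(p0 * (81/100) * n))))) =
      exp (-(exp (1/3 * L)) * (1 - 10 * exp 1 * exp (-(1/3 - 271/1000) * L))) := by
    rw [← exp_add]
    congr 1
    have e1 : exp (-(p0 * (81/100) * n)) = exp (-(729/1000 * L)) := by
      congr 1; linear_combination -(81/100) * hp0n
    have e2 : n * exp (-(729/1000 * L)) = exp (1/3 * L) * exp (-(1/3 - 271/1000) * L) := by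
      rw [hnL, ← exp_add, ← exp_add]; congr 1; ring
    rw [e1, hy]
    linear_combination 10 * exp 1 * e2
  have c7 : (40 * Real.exp (-(p0 * (9/1000) * n))) ^ n ≤ 40 * exp (-(81/10000 * L)) := by
    have e1 : exp (-(p0 * (9/1000) * n)) = exp (-(81/10000 * L)) := by
      congr 1; linear_combination -(9/1000) * hp0n
    rw [e1]
    exact pow_le_of_le_one (by positivity) h7 (by omega)
  rw [c5, c6]
  gcongr

end R4

namespace R4
open MeasureTheory Filter Topology

lemma final_bound (n : ℕ) (hn : 100 ≤ n) (x : Fin n → ℝ) (hx : Function.Injective x)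
    (h0 : 9/10 * Real.log n / n ≤ 1/20) (h1 : 3 * Real.log n / n ≤ 1)
    (h7 : 40 * Real.exp (-(81/10000 * Real.log n)) ≤ 1)
    (Q : Set (Fin (n.choose 2) ≃ {e : Sym2 (Fin n) // ¬ e.IsDiag}))
    (hQ : ∀ σ : Fin (n.choose 2) ≃ {e : Sym2 (Fin n) // ¬ e.IsDiag},
      (∃ τ : ℕ,
          IsLeast {t : ℕ | t ≤ n.choose 2 ∧
            (∀ u : Fin n, 1 ≤ degree (Gt σ t) u) ∧
            (∀ u v : Fin n, degree (Gt σ t) u = 1 → u ≠ v → s(u, v) ∈ Gt σ t →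
              Secure x u v)} τ ∧
          Reconstructible x (Gt σ τ) Set.univ ∧
          ∀ t : ℕ, t < τ → ¬ Reconstructible x (Gt σ t) Set.univ) → σ ∈ Q) :
    1 - ENNReal.ofReal (bnd (Real.log n)) ≤ processMeasure n Q := by
  have hN : (100 : ℝ) ≤ n := by exact_mod_cast hn
  have hL0 : 0 ≤ Real.log n := Real.log_nonneg (by linarith)
  set p0 := 9/10 * Real.log n / n with hp0
  set p1 := 3 * Real.log n / n with hp1
  have hp00 : 0 ≤ p0 := by rw [hp0]; positivity
  have hp10 : 0 ≤ p1 := by rw [hp1]; positivity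
  haveI : IsProbabilityMeasure (processMeasure n) := by unfold processMeasure; infer_instance
  have hc : Fintype.card {e : Sym2 (Fin n) // ¬ e.IsDiag} = n.choose 2 := by
    simpa using Sym2.card_subtype_not_diag (α := Fin n)
  have key : processMeasure n Qᶜ ≤ lab (Ed n) {u | ¬ Good x p0 p1 u} := by
    refine transfer hc Qᶜ trivial _ ?_
    intro σ hσ u hu hg
    exact hσ (hQ σ (process hn hx hg σ hu))
  have hy1 : 1 ≤ Real.exp (1/3 * Real.log n) := Real.one_le_exp (by positivity)
  have hy3 : Real.exp (1/3 * Real.log n) ^ 3 = n := by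
    rw [← Real.exp_nat_mul]
    have : ((3 : ℕ) : ℝ) * (1/3 * Real.log n) = Real.log n := by push_cast; ring
    rw [this, Real.exp_log (by linarith)]
  have hb := (bad_le x hx hp00 (by linarith) hp10 h1 (by omega) _ hy1 hy3).trans
    (bound_le n hn (Real.log n) p0 p1 _ rfl hp0 hp1 rfl h0 h7)
  have hb2 : processMeasure n Qᶜ ≤ ENNReal.ofReal (bnd (Real.log n)) := by
    refine key.trans ?_
    rw [← ofReal_measureReal]
    exact ENNReal.ofReal_le_ofReal hb
  have hQm : MeasurableSet Q := trivial
  rw [tsub_le_iff_right]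
  calc (1 : ENNReal) = processMeasure n Q + processMeasure n Qᶜ := by
        rw [prob_add_prob_compl hQm]
    _ ≤ _ := by gcongr

lemma ev_small : ∀ᶠ n : ℕ in atTop, 9/10 * Real.log n / n ≤ 1/20 ∧ 3 * Real.log n / n ≤ 1 ∧
    40 * Real.exp (-(81/10000 * Real.log n)) ≤ 1 := by
  have hlog : Tendsto (fun n : ℕ => Real.log n) atTop atTop :=
    Real.tendsto_log_atTop.comp tendsto_natCast_atTop_atTop
  have a : Tendsto (fun n : ℕ => Real.log n / n) atTop (𝓝 0) := by
    have h := (te1 1 one_pos).comp hlog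
    refine h.congr' ?_
    filter_upwards [eventually_gt_atTop 0] with n hn
    have : (0 : ℝ) < n := by exact_mod_cast hn
    simp only [Function.comp, one_mul]
    rw [Real.exp_neg, Real.exp_log this, div_eq_mul_inv]
  have b := (((te (81/10000) (by norm_num)).const_mul 40).comp hlog)
  rw [mul_zero] at b
  filter_upwards [a.eventually (gt_mem_nhds (by norm_num : (0:ℝ) < 1/20)),
    b.eventually (gt_mem_nhds (by norm_num : (0:ℝ) < 1))] with n h1 h2
  refine ⟨?_, ?_, h2.le⟩
  · rw [mul_div_assoc]; linarith
  · rw [mul_div_assoc]; linarith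

end R4

/-- Hitting time result: whp the point set becomes reconstructible exactly at the first time
`τ` at which every index has degree at least one and every index of degree one forms a
secure pair with its unique neighbour. -/
theorem statement4
    (x : (n : ℕ) → Fin n → ℝ) (hx : ∀ n, 3 ≤ n → Function.Injective (x n)) :
    Filter.Tendsto
      (fun (n : ℕ) => processMeasure n
        {σ | ∃ τ : ℕ,
          IsLeast {t : ℕ | t ≤ n.choose 2 ∧
            (∀ u : Fin n, 1 ≤ degree (Gt σ t) u) ∧
            (∀ u v : Fin n, degree (Gt σ t) u = 1 → u ≠ v → s(u, v) ∈ Gt σ t →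
              Secure (x n) u v)} τ ∧
          Reconstructible (x n) (Gt σ τ) Set.univ ∧
          ∀ t : ℕ, t < τ → ¬ Reconstructible (x n) (Gt σ t) Set.univ})
      Filter.atTop (nhds 1) := by
  have hlog : Filter.Tendsto (fun n : ℕ => Real.log n) Filter.atTop Filter.atTop :=
    Real.tendsto_log_atTop.comp tendsto_natCast_atTop_atTop
  have hlow : Filter.Tendsto (fun n : ℕ => 1 - ENNReal.ofReal (R4.bnd (Real.log n)))
      Filter.atTop (nhds 1) := by
    have h := ENNReal.tendsto_ofReal (R4.bnd_tendsto.comp hlog)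
    have h2 := ENNReal.Tendsto.sub (tendsto_const_nhds (x := (1 : ENNReal))) h
      (Or.inl ENNReal.one_ne_top)
    simpa using h2
  refine tendsto_of_tendsto_of_tendsto_of_le_of_le' hlow tendsto_const_nhds ?_ ?_
  · filter_upwards [R4.ev_small, Filter.eventually_ge_atTop 100] with n h hn
    exact R4.final_bound n hn (x n) (hx n (by omega)) h.1 h.2.1 h.2.2 _ (fun σ hσ => hσ)
  · refine Filter.Eventually.of_forall fun n => ?_
    haveI : MeasureTheory.IsProbabilityMeasure (processMeasure n) := by
      unfold processMeasure; infer_instance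
    exact MeasureTheory.prob_le_one
end

section
/- For every sequence of injective maps x_n : Fin n → ℝ, consider the random graph process on Fin n. The probability that, for every time 0 ≤ t ≤ N at which every index has degree at least 2 in G_t, the whole set Fin n is reconstructible from G_t, tends to 1 as n → ∞. -/
/-! ### Product weights on colourings -/

open Classical in
/-- The probability of `Q` when each coordinate is coloured independently with law `p`. -/
noncomputable def Pr {ι : Type*} [Fintype ι] [DecidableEq ι] (p : Fin 3 → ℝ) (Q : (ι → Fin 3) → Prop) : ℝ :=
  ∑ c : ι → Fin 3, if Q c then ∏ e, p (c e) else 0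

lemma sum_prod_colour {ι : Type*} [Fintype ι] [DecidableEq ι] (g : ι → Fin 3 → ℝ) :
    ∑ c : ι → Fin 3, ∏ e, g e (c e) = ∏ e, ∑ i, g e i := by
  classical
  rw [Finset.prod_univ_sum]
  simp

lemma Pr_mono {ι : Type*} [Fintype ι] [DecidableEq ι] {p : Fin 3 → ℝ} (hp : ∀ i, 0 ≤ p i)
    {Q R : (ι → Fin 3) → Prop} (h : ∀ c, Q c → R c) : Pr p Q ≤ Pr p R := by
  classical
  unfold Pr
  refine Finset.sum_le_sum fun c _ => ?_
  have hw : 0 ≤ ∏ e, p (c e) := Finset.prod_nonneg fun e _ => hp _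
  by_cases h1 : Q c
  · simp [h1, h c h1]
  · by_cases h2 : R c <;> simp [h1, h2, hw]

lemma Pr_or {ι : Type*} [Fintype ι] [DecidableEq ι] {p : Fin 3 → ℝ} (hp : ∀ i, 0 ≤ p i)
    (Q R : (ι → Fin 3) → Prop) : Pr p (fun c => Q c ∨ R c) ≤ Pr p Q + Pr p R := by
  classical
  unfold Pr
  rw [← Finset.sum_add_distrib]
  refine Finset.sum_le_sum fun c _ => ?_
  have hw : 0 ≤ ∏ e, p (c e) := Finset.prod_nonneg fun e _ => hp _
  by_cases h1 : Q c <;> by_cases h2 : R c <;> simp [h1, h2, hw]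

lemma Pr_exists {ι κ : Type*} [Fintype ι] [DecidableEq ι] {p : Fin 3 → ℝ} (hp : ∀ i, 0 ≤ p i)
    (s : Finset κ) (Q : κ → (ι → Fin 3) → Prop) :
    Pr p (fun c => ∃ k ∈ s, Q k c) ≤ ∑ k ∈ s, Pr p (Q k) := by
  classical
  unfold Pr
  rw [Finset.sum_comm]
  refine Finset.sum_le_sum fun c _ => ?_
  have hw : 0 ≤ ∏ e, p (c e) := Finset.prod_nonneg fun e _ => hp _
  have hnn : ∀ k ∈ s, 0 ≤ (if Q k c then ∏ e, p (c e) else 0) := by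
    intro k _; split_ifs <;> simp [hw]
  split_ifs with h
  · obtain ⟨k, hk, hq⟩ := h
    have := Finset.single_le_sum hnn hk
    simpa [hq] using this
  · exact Finset.sum_nonneg hnn

lemma Pr_le_prod {ι : Type*} [Fintype ι] [DecidableEq ι] {p : Fin 3 → ℝ} (hp : ∀ i, 0 ≤ p i)
    (Q : (ι → Fin 3) → Prop) (K : ℝ) (hK : 0 ≤ K) (f : ι → Fin 3 → ℝ) (hf : ∀ e i, 0 ≤ f e i)
    (h : ∀ c, Q c → 1 ≤ K * ∏ e, f e (c e)) :
    Pr p Q ≤ K * ∏ e, ∑ i, p i * f e i := by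
  classical
  rw [← sum_prod_colour, Finset.mul_sum]
  unfold Pr
  refine Finset.sum_le_sum fun c _ => ?_
  have hw : 0 ≤ ∏ e, p (c e) := Finset.prod_nonneg fun e _ => hp _
  have hf' : 0 ≤ ∏ e, f e (c e) := Finset.prod_nonneg fun e _ => hf _ _
  rw [Finset.prod_mul_distrib]
  split_ifs with hq
  · have := mul_le_mul_of_nonneg_left (h c hq) hw
    nlinarith
  · positivity

/-- Exponential-moment bound covering all tail estimates needed. -/
lemma Pr_chernoff {ι : Type*} [Fintype ι] [DecidableEq ι] {p : Fin 3 → ℝ} (hp : ∀ i, 0 ≤ p i)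
    (hp1 : ∑ i, p i = 1) (Q : (ι → Fin 3) → Prop) (F T : Finset ι) (hFT : Disjoint F T)
    (J : Finset (Fin 3)) (l k : ℝ)
    (h1 : ∀ c, Q c → ∀ e ∈ F, c e ≠ 2)
    (h2 : ∀ c, Q c → l * ((T.filter (fun e => c e ∈ J)).card : ℝ) ≤ l * k) :
    Pr p Q ≤ Real.exp (l * k) * (p 0 + p 1) ^ F.card *
      Real.exp ((∑ i ∈ J, p i) * (Real.exp (-l) - 1) * T.card) := by
  classical
  set f : ι → Fin 3 → ℝ := fun e i =>
    (if e ∈ F then (if i = 2 then 0 else 1) else 1) *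
    (if e ∈ T then (if i ∈ J then Real.exp (-l) else 1) else 1) with hf
  have hb := Pr_le_prod hp Q (Real.exp (l * k)) (Real.exp_pos _).le f ?_ ?_
  · refine hb.trans ?_
    rw [mul_assoc]
    refine mul_le_mul_of_nonneg_left ?_ (Real.exp_pos _).le
    have hle : ∀ e, ∑ i, p i * f e i ≤
        (if e ∈ F then (p 0 + p 1) else 1) *
        (if e ∈ T then Real.exp ((∑ i ∈ J, p i) * (Real.exp (-l) - 1)) else 1) := by
      intro e
      by_cases heF : e ∈ F
      · have heT : e ∉ T := Finset.disjoint_left.mp hFT heF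
        simp [hf, heF, heT, Fin.sum_univ_three]
      · by_cases heT : e ∈ T
        · simp only [hf, heF, heT, if_true, if_false, one_mul]
          have : ∑ i, p i * (if i ∈ J then Real.exp (-l) else 1)
              = (∑ i ∈ J, p i) * (Real.exp (-l) - 1) + 1 := by
            have e0 : ∀ i, p i * (if i ∈ J then Real.exp (-l) else 1)
                = (if i ∈ J then p i else 0) * (Real.exp (-l) - 1) + p i := by
              intro i
              split_ifs <;> ring
            rw [Finset.sum_congr rfl (fun i _ => e0 i), Finset.sum_add_distrib, ← Finset.sum_mul,
              hp1, Finset.sum_ite_mem, Finset.univ_inter]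
          rw [this]
          exact Real.add_one_le_exp _
        · simp [hf, heF, heT, hp1]
    have hnn : ∀ e, 0 ≤ ∑ i, p i * f e i := by
      intro e
      refine Finset.sum_nonneg fun i _ => mul_nonneg (hp i) ?_
      simp only [hf]
      refine mul_nonneg ?_ ?_ <;> split_ifs <;> positivity
    refine (Finset.prod_le_prod (fun e _ => hnn e) (fun e _ => hle e)).trans ?_
    rw [Finset.prod_mul_distrib, Finset.prod_ite_mem, Finset.prod_ite_mem]
    simp only [Finset.univ_inter, Finset.prod_const]
    rw [← Real.exp_nat_mul, mul_comm (T.card : ℝ)]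
  · intro e i
    simp only [hf]
    refine mul_nonneg ?_ ?_ <;> split_ifs <;> positivity
  · intro c hc
    simp only [hf]
    rw [Finset.prod_mul_distrib]
    have a1 : ∏ e, (if e ∈ F then (if c e = 2 then (0:ℝ) else 1) else 1) = 1 := by
      refine Finset.prod_eq_one fun e _ => ?_
      by_cases he : e ∈ F
      · simp [he, h1 c hc e he]
      · simp [he]
    have a2 : ∏ e, (if e ∈ T then (if c e ∈ J then Real.exp (-l) else 1) else 1)
        = Real.exp (-(l * (T.filter (fun e => c e ∈ J)).card)) := by
      rw [Finset.prod_ite_mem, Finset.univ_inter, ← Finset.prod_filter, Finset.prod_const,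
        ← Real.exp_nat_mul]
      congr 1; ring
    rw [a1, a2, one_mul, ← Real.exp_add]
    refine Real.one_le_exp ?_
    linarith [h2 c hc]

/-- Orderings of the pairs. -/
abbrev EdgeOrd (n : ℕ) := Fin (n.choose 2) ≃ {e : Sym2 (Fin n) // ¬ e.IsDiag}

/-! ### Transfer from the process to independent colourings -/

lemma transfer {n : ℕ} {p : Fin 3 → ℝ} (hp : ∀ i, 0 ≤ p i) (hp1 : ∑ i, p i = 1)
    (Bad : Set (Fin (n.choose 2) ≃ {e : Sym2 (Fin n) // ¬ e.IsDiag}))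
    (Q : (Sym2 (Fin n) → Fin 3) → Prop)
    (h : ∀ (c : Sym2 (Fin n) → Fin 3) σ,
      Monotone (fun s => c (σ s : Sym2 (Fin n))) → σ ∈ Bad → Q c) :
    (processMeasure n Bad).toReal ≤ Pr p Q := by
  classical
  let cons : (Sym2 (Fin n) → Fin 3) → EdgeOrd n → Prop :=
    fun c σ => Monotone (fun s => c (σ s : Sym2 (Fin n)))
  let cnt : (Sym2 (Fin n) → Fin 3) → ℝ := fun c => ((Finset.univ.filter (cons c)).card : ℝ)
  have hcnt : ∀ c, 0 < cnt c := by
    intro c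
    have : (Finset.univ.filter (cons c)).Nonempty := by
      obtain ⟨σ0⟩ := (inferInstance : Nonempty (EdgeOrd n))
      refine ⟨(Tuple.sort (fun s => c (σ0 s : Sym2 (Fin n)))).trans σ0, ?_⟩
      simp only [Finset.mem_filter, Finset.mem_univ, true_and]
      exact Tuple.monotone_sort (fun s => c (σ0 s : Sym2 (Fin n)))
    have := Finset.card_pos.mpr this
    exact Nat.cast_pos.mpr this
  let w : (Sym2 (Fin n) → Fin 3) → ℝ := fun c => ∏ e, p (c e)
  have hw : ∀ c, 0 ≤ w c := fun c => Finset.prod_nonneg fun e _ => hp _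
  have hwsum : ∑ c, w c = 1 := by
    have := sum_prod_colour (ι := Sym2 (Fin n)) (fun _ => p)
    simp only [hp1, Finset.prod_const_one] at this
    exact this
  let K : (Sym2 (Fin n) → Fin 3) → EdgeOrd n → ℝ := fun c σ => if cons c σ then 1 / cnt c else 0
  have hKsum : ∀ c, ∑ σ, K c σ = 1 := by
    intro c
    simp only [K]
    rw [← Finset.sum_filter, Finset.sum_const, nsmul_eq_mul]
    exact mul_one_div_cancel (hcnt c).ne'
  let H : EdgeOrd n → ℝ := fun σ => ∑ c, w c * K c σ
  have hconst : ∀ σ σ', H σ = H σ' := by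
    intro σ σ'
    let π : Equiv.Perm {e : Sym2 (Fin n) // ¬ e.IsDiag} := σ.symm.trans σ'
    let Pm : Equiv.Perm (Sym2 (Fin n)) := Equiv.Perm.ofSubtype π
    have hPm : ∀ τ : EdgeOrd n, ∀ s, Pm.symm (((τ.trans π) s : {e : Sym2 (Fin n) // ¬ e.IsDiag}) : Sym2 (Fin n))
        = (τ s : Sym2 (Fin n)) := by
      intro τ s
      rw [Equiv.symm_apply_eq]
      simp only [Pm, Equiv.trans_apply]
      rw [Equiv.Perm.ofSubtype_apply_coe]
    have hσ' : σ' = σ.trans π := by ext s; simp [π]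
    have hcons : ∀ c (τ : EdgeOrd n), cons (fun e => c (Pm.symm e)) (τ.trans π) ↔ cons c τ := by
      intro c τ
      simp only [cons, hPm]
    have hcnt' : ∀ c, cnt (fun e => c (Pm.symm e)) = cnt c := by
      intro c
      simp only [cnt]
      congr 1
      symm
      refine Finset.card_bij (fun τ _ => τ.trans π) ?_ ?_ ?_
      · intro τ hτ
        simp only [Finset.mem_filter, Finset.mem_univ, true_and] at hτ ⊢
        exact (hcons c τ).mpr hτ
      · intro a _ b _ hab
        refine Equiv.ext fun s => π.injective ?_
        exact congrArg (fun f : EdgeOrd n => f s) hab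
      · intro b hb
        have hb' : (b.trans π.symm).trans π = b := by ext s; simp
        refine ⟨b.trans π.symm, ?_, hb'⟩
        simp only [Finset.mem_filter, Finset.mem_univ, true_and] at hb ⊢
        rw [← hcons, hb']
        exact hb
    simp only [H]
    refine Fintype.sum_equiv (Equiv.arrowCongr Pm (Equiv.refl _)) _ _ ?_
    intro c
    have e1 : (Equiv.arrowCongr Pm (Equiv.refl (Fin 3))) c = fun e => c (Pm.symm e) := by
      ext e; simp [Equiv.arrowCongr]
    rw [e1]
    congr 1
    · simp only [w]
      exact (Equiv.prod_comp Pm.symm (fun e => p (c e))).symm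
    · simp only [K]
      rw [hcnt', hσ']
      simp only [hcons]
  have hHsum : ∑ σ, H σ = 1 := by
    simp only [H]
    rw [Finset.sum_comm]
    simp only [← Finset.mul_sum, hKsum, mul_one, hwsum]
  have hcard : (0 : ℝ) < Fintype.card (EdgeOrd n) := by exact_mod_cast Fintype.card_pos
  have hH : ∀ σ, H σ = 1 / Fintype.card (EdgeOrd n) := by
    intro σ
    have : ∑ σ', H σ' = Fintype.card (EdgeOrd n) * H σ := by
      rw [Finset.sum_congr rfl (fun σ' _ => hconst σ' σ)]
      simp
    rw [hHsum] at this
    field_simp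
    linarith
  have hmeas : (processMeasure n Bad).toReal = ∑ σ, if σ ∈ Bad then H σ else 0 := by
    unfold processMeasure
    rw [PMF.toMeasure_uniformOfFintype_apply Bad trivial]
    simp only [hH]
    rw [← Finset.sum_filter, Finset.sum_const, nsmul_eq_mul, ENNReal.toReal_div]
    rw [Fintype.card_subtype]
    simp
    ring
  rw [hmeas]
  have : ∀ σ, (if σ ∈ Bad then H σ else 0) ≤ ∑ c, (if Q c then w c else 0) * K c σ := by
    intro σ
    have hKnn : ∀ c, 0 ≤ K c σ := by
      intro c; simp only [K]; split_ifs
      · exact (one_div_pos.mpr (hcnt c)).le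
      · exact le_rfl
    split_ifs with hb
    · simp only [H]
      refine Finset.sum_le_sum fun c _ => ?_
      by_cases hc : cons c σ
      · simp [h c σ hc hb]
      · simp [K, hc]
    · refine Finset.sum_nonneg fun c _ => mul_nonneg ?_ (hKnn c)
      split_ifs
      · exact hw c
      · exact le_rfl
  refine (Finset.sum_le_sum fun σ _ => this σ).trans ?_
  rw [Finset.sum_comm]
  simp only [← Finset.mul_sum, hKsum, mul_one]
  unfold Pr
  refine le_of_eq (Finset.sum_congr rfl fun c _ => ?_)
  by_cases hq : Q c <;> simp [hq, w]


/-! ### The deterministic argument -/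

open Classical in
/-- Either the values of `f` split into two large classes, or one value is taken almost always. -/
lemma split_or_atom {n : ℕ} (f : Fin n → ℝ) (m : ℕ) (hm : 2 * m ≤ n) (hn : 0 < n) :
    (∃ R : Set ℝ, 2 * m ≤ (Finset.univ.filter (fun i => f i ∈ R)).card ∧
      2 * m ≤ (Finset.univ.filter (fun i => f i ∉ R)).card) ∨
    ∃ r, (Finset.univ.filter (fun i => f i ≠ r)).card ≤ 4 * m := by
  classical
  have hne : (Finset.univ : Finset (Fin n)).Nonempty := ⟨⟨0, hn⟩, Finset.mem_univ _⟩
  let A := Finset.univ.filter (fun i => 2 * m ≤ (Finset.univ.filter (fun j => f j ≤ f i)).card)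
  have hA : A.Nonempty := by
    obtain ⟨i, -, hi⟩ := Finset.exists_max_image Finset.univ f hne
    refine ⟨i, ?_⟩
    simp only [A, Finset.mem_filter, Finset.mem_univ, true_and]
    rw [Finset.filter_true_of_mem (fun j hj => hi j hj)]
    simpa using hm
  obtain ⟨i, hiA, hi⟩ := Finset.exists_min_image A f hA
  have hi1 : 2 * m ≤ (Finset.univ.filter (fun j => f j ≤ f i)).card := by
    simpa [A] using hiA
  have hlt : (Finset.univ.filter (fun j => f j < f i)).card ≤ 2 * m := by
    by_cases he : (Finset.univ.filter (fun j => f j < f i)).Nonempty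
    · obtain ⟨k, hk, hkm⟩ := Finset.exists_max_image _ f he
      have hk' : f k < f i := by simpa using hk
      by_contra hcon
      have : k ∈ A := by
        simp only [A, Finset.mem_filter, Finset.mem_univ, true_and]
        refine le_trans (not_le.mp hcon).le (Finset.card_le_card ?_)
        intro j hj
        have := hkm j hj
        simpa using this
      exact absurd (hi k this) (not_le.mpr hk')
    · rw [Finset.not_nonempty_iff_eq_empty] at he
      rw [he]; simp
  by_cases h : 2 * m ≤ (Finset.univ.filter (fun j => ¬ f j ≤ f i)).card
  · left
    refine ⟨Set.Iic (f i), ?_, ?_⟩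
    · simpa using hi1
    · simpa using h
  · right
    refine ⟨f i, ?_⟩
    have : Finset.univ.filter (fun j => f j ≠ f i) ⊆
        Finset.univ.filter (fun j => f j < f i) ∪ Finset.univ.filter (fun j => ¬ f j ≤ f i) := by
      intro j hj
      simp only [Finset.mem_filter, Finset.mem_univ, true_and, Finset.mem_union, not_le] at hj ⊢
      exact lt_or_gt_of_ne hj
    have h1 := Finset.card_le_card this
    have h2 := Finset.card_union_le (Finset.univ.filter (fun j => f j < f i))
      (Finset.univ.filter (fun j => ¬ f j ≤ f i))
    omega

lemma exists_atom {n : ℕ} (a b : Fin n → ℝ) (m : ℕ) (hm : 2 * m ≤ n) (hn : 0 < n)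
    (E0 : Fin n → Fin n → Prop) (hE : ∀ i j, E0 i j → a i = a j ∨ b i = b j)
    (hX : ∀ X Y : Finset (Fin n), Disjoint X Y → m ≤ X.card → m ≤ Y.card →
      ∃ i ∈ X, ∃ j ∈ Y, E0 i j) :
    (∃ r, (Finset.univ.filter (fun i => a i ≠ r)).card ≤ 4 * m) ∨
    (∃ r, (Finset.univ.filter (fun i => b i ≠ r)).card ≤ 4 * m) := by
  classical
  rcases split_or_atom a m hm hn with ⟨R, hR1, hR2⟩ | h
  swap; · exact Or.inl h
  rcases split_or_atom b m hm hn with ⟨C, hC1, hC2⟩ | h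
  swap; · exact Or.inr h
  exfalso
  let q : Prop → Prop → Finset (Fin n) := fun P Q => Finset.univ.filter
    (fun i => (a i ∈ R ↔ P) ∧ (b i ∈ C ↔ Q))
  have key : ∀ P Q : Prop, ¬ (m ≤ (q P Q).card ∧ m ≤ (q (¬ P) (¬ Q)).card) := by
    rintro P Q ⟨h1, h2⟩
    have hd : Disjoint (q P Q) (q (¬ P) (¬ Q)) := by
      rw [Finset.disjoint_left]
      intro i hi hi'
      simp only [q, Finset.mem_filter, Finset.mem_univ, true_and] at hi hi'
      tauto
    obtain ⟨i, hi, j, hj, hij⟩ := hX _ _ hd h1 h2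
    simp only [q, Finset.mem_filter, Finset.mem_univ, true_and] at hi hj
    rcases hE i j hij with h | h
    · rw [h] at hi; tauto
    · rw [h] at hi; tauto
  have k1 := key True True
  have k2 := key True False
  simp only [not_true_eq_false, not_false_eq_true] at k1 k2
  have s1 : (Finset.univ.filter (fun i => a i ∈ R)).card ≤ (q True True).card + (q True False).card := by
    refine le_trans (Finset.card_le_card ?_) (Finset.card_union_le _ _)
    intro i; simp [q]; tauto
  have s2 : (Finset.univ.filter (fun i => ¬ a i ∈ R)).card ≤ (q False True).card + (q False False).card := by
    refine le_trans (Finset.card_le_card ?_) (Finset.card_union_le _ _)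
    intro i; simp [q]; tauto
  have s3 : (Finset.univ.filter (fun i => b i ∈ C)).card ≤ (q True True).card + (q False True).card := by
    refine le_trans (Finset.card_le_card ?_) (Finset.card_union_le _ _)
    intro i; simp [q]; tauto
  have s4 : (Finset.univ.filter (fun i => ¬ b i ∈ C)).card ≤ (q True False).card + (q False False).card := by
    refine le_trans (Finset.card_le_card ?_) (Finset.card_union_le _ _)
    intro i; simp [q]; tauto
  omega

/-- Number of neighbours of `u` along colours in `J`. -/
def nbrs {n : ℕ} (c : Sym2 (Fin n) → Fin 3) (J : Finset (Fin 3)) (u : Fin n) : Finset (Fin n) :=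
  Finset.univ.filter (fun y => y ≠ u ∧ c s(u, y) ∈ J)

/-- The properties of the two-level random graph used by the deterministic argument. -/
structure GoodColouring {n : ℕ} (m D : ℕ) (c : Sym2 (Fin n) → Fin 3) : Prop where
  isolated : ∃ v, nbrs c {0} v = ∅
  mindeg : ∀ v, 2 ≤ (nbrs c {0, 1} v).card
  dense : ∀ X Y : Finset (Fin n), Disjoint X Y → m ≤ X.card → m ≤ Y.card →
      ∃ i ∈ X, ∃ j ∈ Y, c s(i, j) = 0
  smallEdge : ∀ u v, u ≠ v → (nbrs c {0} u).card < D → (nbrs c {0} v).card < D → c s(u, v) = 2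
  smallPath : ∀ u v w, u ≠ v → u ≠ w → v ≠ w →
      (nbrs c {0} u).card < D → (nbrs c {0} v).card < D → c s(u, w) ≠ 2 → c s(v, w) = 2
  sparse : ∀ S : Finset (Fin n), S.Nonempty → S.card ≤ 4 * m →
      4 * (S.sym2.filter (fun e => c e ∈ ({0} : Finset (Fin 3)))).card < D * S.card

lemma one_line {n : ℕ} {m D : ℕ} (hD : 4 ≤ D) {c : Sym2 (Fin n) → Fin 3}
    (hc : GoodColouring m D c)
    (a b : Fin n → ℝ) (hinj : ∀ i j, a i = a j → b i = b j → i = j)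
    (G : Fin n → Fin n → Prop)
    (hG0 : ∀ i j, i ≠ j → c s(i, j) = 0 → G i j)
    (hG1 : ∀ i j, G i j → c s(i, j) ≠ 2)
    (hdeg : ∀ v, ∃ y z, y ≠ z ∧ y ≠ v ∧ z ≠ v ∧ G v y ∧ G v z)
    (hE : ∀ i j, G i j → a i = a j ∨ b i = b j)
    (r : ℝ) (hr : (Finset.univ.filter (fun i => a i ≠ r)).card ≤ 4 * m) :
    ∀ i, a i = r := by
  classical
  -- a vertex off the line has at most one neighbour on it
  have huniq : ∀ v y z, a v ≠ r → a y = r → a z = r → G v y → G v z → y = z := by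
    intro v y z hv hy hz h1 h2
    refine hinj y z (hy.trans hz.symm) ?_
    have e1 : b v = b y := (hE v y h1).resolve_left (fun h => hv (h.trans hy))
    have e2 : b v = b z := (hE v z h2).resolve_left (fun h => hv (h.trans hz))
    exact e1.symm.trans e2
  let S := Finset.univ.filter (fun i => a i ≠ r ∧ D ≤ (nbrs c {0} i).card)
  have hS : S = ∅ := by
    by_contra hne
    have hne := Finset.nonempty_iff_ne_empty.mpr hne
    have hcard : S.card ≤ 4 * m := by
      refine le_trans (Finset.card_le_card ?_) hr
      intro i hi
      simp only [S, Finset.mem_filter, Finset.mem_univ, true_and] at hi ⊢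
      exact hi.1
    have hsp := hc.sparse S hne hcard
    -- inner degrees
    have hin : ∀ v ∈ S, D ≤ 2 * ((nbrs c {0} v) ∩ S).card := by
      intro v hv
      simp only [S, Finset.mem_filter, Finset.mem_univ, true_and] at hv
      have hsub : nbrs c {0} v ⊆ ((nbrs c {0} v) ∩ S) ∪
          ((nbrs c {0} v).filter (fun y => a y = r) ∪
           (nbrs c {0} v).filter (fun y => (nbrs c {0} y).card < D)) := by
        intro y hy
        simp only [Finset.mem_union, Finset.mem_inter, Finset.mem_filter, hy, true_and, S,
          Finset.mem_univ]
        by_cases h1 : a y = r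
        · simp [h1]
        · by_cases h2 : (nbrs c {0} y).card < D
          · simp [h2]
          · simp [h1, not_lt.mp h2]
      have h1 : ((nbrs c {0} v).filter (fun y => a y = r)).card ≤ 1 := by
        rw [Finset.card_le_one]
        intro y hy z hz
        simp only [nbrs, Finset.mem_filter, Finset.mem_univ, true_and, Finset.mem_singleton] at hy hz
        exact huniq v y z hv.1 hy.2 hz.2 (hG0 _ _ hy.1.1.symm hy.1.2) (hG0 _ _ hz.1.1.symm hz.1.2)
      have h2 : ((nbrs c {0} v).filter (fun y => (nbrs c {0} y).card < D)).card ≤ 1 := by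
        rw [Finset.card_le_one]
        intro y hy z hz
        rw [Finset.mem_filter] at hy hz
        by_contra hyz
        have hy1 := hy.1
        have hz1 := hz.1
        simp only [nbrs, Finset.mem_filter, Finset.mem_univ, true_and, Finset.mem_singleton] at hy1 hz1
        have e1 : c s(y, v) = 0 := by rw [Sym2.eq_swap]; exact hy1.2
        have e2 : c s(z, v) = 0 := by rw [Sym2.eq_swap]; exact hz1.2
        have := hc.smallPath y z v hyz hy1.1 hz1.1 hy.2 hz.2 (by rw [e1]; decide)
        rw [e2] at this
        exact absurd this (by decide)
      have h3 := Finset.card_le_card hsub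
      have h4 := Finset.card_union_le ((nbrs c {0} v) ∩ S)
        ((nbrs c {0} v).filter (fun y => a y = r) ∪
           (nbrs c {0} v).filter (fun y => (nbrs c {0} y).card < D))
      have h5 := Finset.card_union_le ((nbrs c {0} v).filter (fun y => a y = r))
           ((nbrs c {0} v).filter (fun y => (nbrs c {0} y).card < D))
      omega
    -- handshake
    let P := S.sigma (fun v => (nbrs c {0} v) ∩ S)
    have hP : D * S.card ≤ 2 * P.card := by
      rw [Finset.card_sigma, Finset.mul_sum, mul_comm, ← smul_eq_mul, ← Finset.sum_const]
      exact Finset.sum_le_sum hin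
    have hP2 : P.card ≤ 2 * (S.sym2.filter (fun e => c e ∈ ({0} : Finset (Fin 3)))).card := by
      refine Finset.card_le_mul_card_image_of_maps_to (f := fun q => s(q.1, q.2)) ?_ 2 ?_
      · rintro ⟨v, y⟩ hq
        simp only [P, Finset.mem_sigma, Finset.mem_inter, nbrs, Finset.mem_filter, Finset.mem_univ,
          true_and] at hq
        simp only [Finset.mem_filter, Finset.mk_mem_sym2_iff]
        exact ⟨⟨hq.1, hq.2.2⟩, hq.2.1.2⟩
      · intro e _
        induction e using Sym2.ind with
        | _ u v =>
          refine le_trans (Finset.card_le_card (t := {⟨u, v⟩, ⟨v, u⟩}) ?_) Finset.card_le_two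
          rintro ⟨y, z⟩ hq
          simp only [Finset.mem_filter, Sym2.eq_iff] at hq
          simp only [Finset.mem_insert, Finset.mem_singleton, Sigma.mk.injEq, heq_eq_eq]
          exact hq.2
    omega
  by_contra hcon
  push Not at hcon
  obtain ⟨v, hv⟩ := hcon
  have hsmall : ∀ u, a u ≠ r → (nbrs c {0} u).card < D := by
    intro u hu
    by_contra h
    have : u ∈ S := by simp [S, hu, not_lt.mp h]
    rw [hS] at this
    simp at this
  have hnb : ∀ y, y ≠ v → G v y → a y = r := by
    intro y hyv hy
    by_contra h
    exact hG1 v y hy (hc.smallEdge v y hyv.symm (hsmall v hv) (hsmall y h))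
  obtain ⟨y, z, hyz, hy, hz, h1, h2⟩ := hdeg v
  exact hyz (huniq v y z hv (hnb y hy h1) (hnb z hz h2) h1 h2)

lemma rigid_middle {n : ℕ} {m D : ℕ} (hD : 4 ≤ D) (hm : 2 * m ≤ n) (hm0 : 0 < m)
    {c : Sym2 (Fin n) → Fin 3} (hc : GoodColouring m D c)
    (x : Fin n → ℝ) (hx : Function.Injective x) (G : Set (Sym2 (Fin n)))
    (hG0 : ∀ i j, i ≠ j → c s(i, j) = 0 → s(i, j) ∈ G)
    (hG1 : ∀ i j, s(i, j) ∈ G → c s(i, j) ≠ 2)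
    (hdeg : ∀ v, ∃ y z, y ≠ z ∧ y ≠ v ∧ z ≠ v ∧ s(v, y) ∈ G ∧ s(v, z) ∈ G) :
    Reconstructible x G Set.univ := by
  intro w hw hwx i _ j _
  let a : Fin n → ℝ := fun i => w i - x i
  let b : Fin n → ℝ := fun i => w i + x i
  have hE : ∀ i j, s(i, j) ∈ G → a i = a j ∨ b i = b j := by
    intro i j hij
    rcases abs_eq_abs.mp (hwx i j hij) with h | h
    · left; simp only [a]; linarith
    · right; simp only [b]; linarith
  have hinj : ∀ i j, a i = a j → b i = b j → i = j := by
    intro i j h1 h2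
    apply hx
    simp only [a, b] at h1 h2
    linarith
  have hdense : ∀ X Y : Finset (Fin n), Disjoint X Y → m ≤ X.card → m ≤ Y.card →
      ∃ i ∈ X, ∃ j ∈ Y, s(i, j) ∈ G := by
    intro X Y hd h1 h2
    obtain ⟨i, hi, j, hj, h⟩ := hc.dense X Y hd h1 h2
    refine ⟨i, hi, j, hj, hG0 i j ?_ h⟩
    rintro rfl
    exact Finset.disjoint_left.mp hd hi hj
  rcases exists_atom a b m hm (by omega) (fun i j => s(i, j) ∈ G) hE hdense with ⟨r, hr⟩ | ⟨r, hr⟩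
  · have h := one_line hD hc a b hinj (fun i j => s(i, j) ∈ G) hG0 hG1 hdeg hE r hr
    have h1 := h i
    have h2 := h j
    simp only [a] at h1 h2
    have : w i - w j = x i - x j := by linarith
    rw [this]
  · have h := one_line hD hc b a (fun i j h1 h2 => hinj i j h2 h1) (fun i j => s(i, j) ∈ G)
      hG0 hG1 hdeg (fun i j hij => (hE i j hij).symm) r hr
    have h1 := h i
    have h2 := h j
    simp only [b] at h1 h2
    have : w i - w j = -(x i - x j) := by linarith
    rw [this, abs_neg]

lemma two_nbrs {n : ℕ} {G : Set (Sym2 (Fin n))} (hG : ∀ e ∈ G, ¬ e.IsDiag) (v : Fin n)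
    (h : 2 ≤ degree G v) :
    ∃ y z, y ≠ z ∧ y ≠ v ∧ z ≠ v ∧ s(v, y) ∈ G ∧ s(v, z) ∈ G := by
  unfold degree at h
  have h' : 1 < {e ∈ G | v ∈ e}.ncard := h
  rw [Set.one_lt_ncard_iff] at h'
  obtain ⟨e, f, he, hf, hef⟩ := h'
  obtain ⟨y, rfl⟩ := Sym2.mem_iff_exists.mp he.2
  obtain ⟨z, rfl⟩ := Sym2.mem_iff_exists.mp hf.2
  refine ⟨y, z, ?_, ?_, ?_, he.1, hf.1⟩
  · rintro rfl; exact hef rfl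
  · rintro rfl; exact hG _ he.1 (by simp)
  · rintro rfl; exact hG _ hf.1 (by simp)

/-- A good colouring, consistent with the order, forces the desired property. -/
lemma good_process {n : ℕ} {m D : ℕ} (hD : 4 ≤ D) (hm : 2 * m ≤ n) (hm0 : 0 < m)
    {c : Sym2 (Fin n) → Fin 3} (hc : GoodColouring m D c)
    (x : Fin n → ℝ) (hx : Function.Injective x) (σ : EdgeOrd n)
    (hσ : Monotone (fun s => c (σ s : Sym2 (Fin n)))) (t : ℕ)
    (hdeg : ∀ u : Fin n, 2 ≤ degree (Gt σ t) u) :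
    Reconstructible x (Gt σ t) Set.univ := by
  have hnd : ∀ e ∈ Gt σ t, ¬ e.IsDiag := by
    rintro e ⟨s, -, rfl⟩
    exact (σ s).2
  have hnb := fun v => two_nbrs hnd v (hdeg v)
  -- initial segment property
  have hpre : ∀ e f : Sym2 (Fin n), e ∉ Gt σ t → ¬ e.IsDiag → f ∈ Gt σ t → c f ≤ c e := by
    rintro e f he hed ⟨s, hs, rfl⟩
    have hes : (σ (σ.symm ⟨e, hed⟩) : Sym2 (Fin n)) = e := by simp
    have h1 : ¬ ((σ.symm ⟨e, hed⟩ : Fin _) : ℕ) < t := fun h => he ⟨_, h, hes⟩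
    have : s ≤ σ.symm ⟨e, hed⟩ := by
      rw [Fin.le_def]; omega
    have := hσ this
    simpa using this
  have hdg : ∀ i j : Fin n, i ≠ j → ¬ (s(i, j)).IsDiag := by
    intro i j h; simpa using h
  by_cases h0 : ∀ i j, i ≠ j → c s(i, j) = 0 → s(i, j) ∈ Gt σ t
  · by_cases h1 : ∀ i j, s(i, j) ∈ Gt σ t → c s(i, j) ≠ 2
    · exact rigid_middle hD hm hm0 hc x hx _ h0 h1 hnb
    · -- contains the whole second level
      push Not at h1
      obtain ⟨i, j, hij, hij2⟩ := h1
      have hsup : ∀ i' j', i' ≠ j' → c s(i', j') ≠ 2 → s(i', j') ∈ Gt σ t := by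
        intro i' j' hne h2
        by_contra hcon
        have := hpre _ _ hcon (hdg _ _ hne) hij
        rw [hij2] at this
        apply h2
        exact le_antisymm (Fin.le_last _) this
      have hr : Reconstructible x {e | ¬ e.IsDiag ∧ c e ≠ 2} Set.univ := by
        refine rigid_middle hD hm hm0 hc x hx _ ?_ ?_ ?_
        · intro i j hne h
          exact ⟨hdg _ _ hne, by rw [h]; decide⟩
        · intro i j h
          exact h.2
        · intro v
          obtain ⟨y, hy, z, hz, hyz⟩ := Finset.one_lt_card.mp (hc.mindeg v)
          simp only [nbrs, Finset.mem_filter, Finset.mem_univ, true_and] at hy hz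
          have key : ∀ i : Fin 3, i ∈ ({0, 1} : Finset (Fin 3)) → i ≠ 2 := by decide
          exact ⟨y, z, hyz, hy.1, hz.1, ⟨hdg _ _ hy.1.symm, key _ hy.2⟩,
            ⟨hdg _ _ hz.1.symm, key _ hz.2⟩⟩
      intro w hw hwx
      refine hr w hw ?_
      rintro i j ⟨h1, h2⟩
      exact hwx i j (hsup i j (by simpa using h1) h2)
  · push Not at h0
    obtain ⟨i, j, hij, hij0, hcon⟩ := h0
    exfalso
    obtain ⟨v, hv⟩ := hc.isolated
    obtain ⟨y, z, hyz, hy, hz, h1, h2⟩ := hnb v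
    have := hpre _ _ hcon (hdg _ _ hij) h1
    rw [hij0] at this
    have h0 : c s(v, y) = 0 := le_antisymm this (Fin.zero_le _)
    have : y ∈ nbrs c {0} v := by simp [nbrs, hy, h0]
    rw [hv] at this
    simp at this


/-! ### Probability estimates -/

lemma exp_neg_two_le : Real.exp (-2) ≤ 0.14 := by
  have h := Real.exp_one_gt_d9
  have h2 : Real.exp 2 = Real.exp 1 * Real.exp 1 := by rw [← Real.exp_add]; norm_num
  rw [Real.exp_neg, inv_le_comm₀ (Real.exp_pos _) (by norm_num), h2]
  nlinarith

/-- The pairs containing `v`. -/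
def starAt {n : ℕ} (v : Fin n) : Finset (Sym2 (Fin n)) :=
  (Finset.univ.erase v).image (fun y => s(v, y))

lemma mk_left_injective {n : ℕ} (v : Fin n) : Function.Injective (fun y : Fin n => s(v, y)) := by
  intro y z h
  exact Sym2.congr_right.mp h

lemma card_starAt {n : ℕ} (v : Fin n) : (starAt v).card = n - 1 := by
  unfold starAt
  rw [Finset.card_image_of_injective _ (mk_left_injective v)]
  simp

lemma card_filter_starAt {n : ℕ} (c : Sym2 (Fin n) → Fin 3) (J : Finset (Fin 3)) (v : Fin n) :
    ((starAt v).filter (fun e => c e ∈ J)).card = (nbrs c J v).card := by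
  unfold starAt
  rw [Finset.filter_image, Finset.card_image_of_injective _ (mk_left_injective v)]
  congr 1
  ext y
  simp [nbrs]

lemma Pr_mindeg {n : ℕ} {p : Fin 3 → ℝ} (hp : ∀ i, 0 ≤ p i) (hp1 : ∑ i, p i = 1) :
    Pr p (fun c : Sym2 (Fin n) → Fin 3 => ∃ v ∈ Finset.univ, (nbrs c {0, 1} v).card < 2) ≤
      n * Real.exp (2 - 0.86 * (p 0 + p 1) * (n - 1 : ℕ)) := by
  refine (Pr_exists hp _ _).trans ?_
  have : ∀ v ∈ (Finset.univ : Finset (Fin n)),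
      Pr p (fun c : Sym2 (Fin n) → Fin 3 => (nbrs c {0, 1} v).card < 2) ≤
      Real.exp (2 - 0.86 * (p 0 + p 1) * (n - 1 : ℕ)) := by
    intro v _
    have h := Pr_chernoff hp hp1 (fun c : Sym2 (Fin n) → Fin 3 => (nbrs c {0, 1} v).card < 2)
      ∅ (starAt v) (by simp) {0, 1} 2 1 (by simp) ?_
    · refine h.trans ?_
      rw [card_starAt, Finset.card_empty, pow_zero, mul_one, ← Real.exp_add,
        Finset.sum_pair (by decide)]
      apply Real.exp_le_exp.mpr
      have h1 : 0 ≤ (p 0 + p 1) * ((n - 1 : ℕ) : ℝ) :=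
        mul_nonneg (add_nonneg (hp 0) (hp 1)) (Nat.cast_nonneg _)
      have h2 := exp_neg_two_le
      nlinarith
    · intro c hc
      rw [card_filter_starAt]
      have : (nbrs c {0, 1} v).card ≤ 1 := by omega
      have : ((nbrs c {0, 1} v).card : ℝ) ≤ 1 := by exact_mod_cast this
      linarith
  refine (Finset.sum_le_sum this).trans ?_
  simp

lemma Pr_dense {n m : ℕ} {p : Fin 3 → ℝ} (hp : ∀ i, 0 ≤ p i) (hp1 : ∑ i, p i = 1) :
    Pr p (fun c : Sym2 (Fin n) → Fin 3 => ∃ XY ∈ (Finset.univ : Finset (Finset (Fin n) × Finset (Fin n))),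
      Disjoint XY.1 XY.2 ∧ m ≤ XY.1.card ∧ m ≤ XY.2.card ∧
        ∀ i ∈ XY.1, ∀ j ∈ XY.2, c s(i, j) ≠ 0) ≤
      4 ^ n * Real.exp (- (0.86 * p 0 * m ^ 2)) := by
  refine (Pr_exists hp _ _).trans ?_
  have : ∀ XY ∈ (Finset.univ : Finset (Finset (Fin n) × Finset (Fin n))),
      Pr p (fun c : Sym2 (Fin n) → Fin 3 => Disjoint XY.1 XY.2 ∧ m ≤ XY.1.card ∧ m ≤ XY.2.card ∧
        ∀ i ∈ XY.1, ∀ j ∈ XY.2, c s(i, j) ≠ 0) ≤ Real.exp (- (0.86 * p 0 * m ^ 2)) := by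
    rintro ⟨X, Y⟩ -
    by_cases hXY : Disjoint X Y ∧ m ≤ X.card ∧ m ≤ Y.card
    swap
    · refine le_trans (le_of_eq ?_) (Real.exp_pos _).le
      unfold Pr
      refine Finset.sum_eq_zero fun c _ => ?_
      rw [if_neg]
      tauto
    obtain ⟨hd, hX, hY⟩ := hXY
    have hcard : ((X ×ˢ Y).image (fun q => s(q.1, q.2))).card = X.card * Y.card := by
      rw [Finset.card_image_of_injOn, Finset.card_product]
      rintro ⟨i, j⟩ h1 ⟨i', j'⟩ h2 h
      simp only [Finset.coe_product, Set.mem_prod, Finset.mem_coe] at h1 h2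
      simp only [Sym2.eq_iff] at h
      rcases h with ⟨h, h'⟩ | ⟨h, h'⟩
      · rw [h, h']
      · exact absurd h2.2 (h ▸ Finset.disjoint_left.mp hd h1.1)
    have h := Pr_chernoff hp hp1 (fun c : Sym2 (Fin n) → Fin 3 => Disjoint X Y ∧ m ≤ X.card ∧
        m ≤ Y.card ∧ ∀ i ∈ X, ∀ j ∈ Y, c s(i, j) ≠ 0)
      ∅ ((X ×ˢ Y).image (fun q => s(q.1, q.2))) (by simp) {0} 2 0 (by simp) ?_
    · refine h.trans ?_
      rw [hcard, Finset.card_empty, pow_zero, mul_one, ← Real.exp_add, Finset.sum_singleton]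
      apply Real.exp_le_exp.mpr
      have h1 : (m : ℝ) ^ 2 ≤ ((X.card * Y.card : ℕ) : ℝ) := by
        rw [sq]; exact_mod_cast Nat.mul_le_mul hX hY
      have h3 : p 0 * (m : ℝ) ^ 2 ≤ p 0 * ((X.card * Y.card : ℕ) : ℝ) :=
        mul_le_mul_of_nonneg_left h1 (hp 0)
      have h4 : 0 ≤ p 0 * ((X.card * Y.card : ℕ) : ℝ) := mul_nonneg (hp 0) (Nat.cast_nonneg _)
      have h2 := exp_neg_two_le
      nlinarith
    · rintro c ⟨-, -, -, hc⟩
      rw [Finset.filter_false_of_mem]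
      · simp
      · intro e he
        simp only [Finset.mem_image, Finset.mem_product] at he
        obtain ⟨⟨i, j⟩, ⟨hi, hj⟩, rfl⟩ := he
        simpa using hc i hi j hj
  refine (Finset.sum_le_sum this).trans ?_
  rw [Finset.sum_const, nsmul_eq_mul]
  refine le_of_eq ?_
  congr 1
  simp only [Finset.card_univ, Fintype.card_prod, Fintype.card_finset, Fintype.card_fin]
  push_cast
  rw [← mul_pow]; norm_num

lemma Pr_small_pair {n : ℕ} {p : Fin 3 → ℝ} (hp : ∀ i, 0 ≤ p i) (hp1 : ∑ i, p i = 1)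
    (L : ℝ) (u v : Fin n) (huv : u ≠ v) (A : Finset (Fin n)) (hu : u ∈ A) (hv : v ∈ A)
    (hA : A.card ≤ 3) (F : Finset (Sym2 (Fin n))) (hF : F ⊆ A.sym2) :
    Pr p (fun c : Sym2 (Fin n) → Fin 3 => (nbrs c {0} u).card < ⌈L / 20⌉₊ ∧
        (nbrs c {0} v).card < ⌈L / 20⌉₊ ∧ ∀ e ∈ F, c e ≠ 2) ≤
      Real.exp (L / 5 - 1.72 * p 0 * (n - 3 : ℕ)) * (p 0 + p 1) ^ F.card := by
  classical
  let Tu := (Aᶜ).image (fun y => s(u, y))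
  let Tv := (Aᶜ).image (fun y => s(v, y))
  have hd : Disjoint Tu Tv := by
    rw [Finset.disjoint_left]
    intro e h1 h2
    simp only [Tu, Tv, Finset.mem_image, Finset.mem_compl] at h1 h2
    obtain ⟨y, hy, rfl⟩ := h1
    obtain ⟨z, hz, h⟩ := h2
    rw [Sym2.eq_iff] at h
    rcases h with ⟨h, -⟩ | ⟨h, -⟩
    · exact huv h.symm
    · exact hy (h ▸ hv)
  have hcard : 2 * (n - 3) ≤ (Tu ∪ Tv).card := by
    rw [Finset.card_union_of_disjoint hd]
    simp only [Tu, Tv]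
    rw [Finset.card_image_of_injective _ (mk_left_injective u),
      Finset.card_image_of_injective _ (mk_left_injective v), Finset.card_compl, Fintype.card_fin]
    omega
  have hFT : Disjoint F (Tu ∪ Tv) := by
    rw [Finset.disjoint_left]
    intro e h1 h2
    have h1 := hF h1
    simp only [Tu, Tv, Finset.mem_union, Finset.mem_image, Finset.mem_compl] at h2
    rcases h2 with ⟨y, hy, rfl⟩ | ⟨y, hy, rfl⟩
    · exact hy (Finset.mk_mem_sym2_iff.mp h1).2
    · exact hy (Finset.mk_mem_sym2_iff.mp h1).2
  have hsub : ∀ w ∈ A, ∀ c : Sym2 (Fin n) → Fin 3,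
      (((Aᶜ).image (fun y => s(w, y))).filter (fun e => c e ∈ ({0} : Finset (Fin 3)))).card ≤
      (nbrs c {0} w).card := by
    intro w hw c
    rw [Finset.filter_image, Finset.card_image_of_injective _ (mk_left_injective w)]
    apply Finset.card_le_card
    intro y hy
    simp only [Finset.mem_filter, Finset.mem_compl, nbrs, Finset.mem_univ, true_and] at hy ⊢
    exact ⟨fun h => hy.1 (h ▸ hw), hy.2⟩
  have h := Pr_chernoff hp hp1 (fun c : Sym2 (Fin n) → Fin 3 => (nbrs c {0} u).card < ⌈L / 20⌉₊ ∧
        (nbrs c {0} v).card < ⌈L / 20⌉₊ ∧ ∀ e ∈ F, c e ≠ 2) F (Tu ∪ Tv) hFT {0} 2 (L / 10) ?_ ?_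
  · refine h.trans ?_
    rw [mul_right_comm, ← Real.exp_add, Finset.sum_singleton]
    refine mul_le_mul_of_nonneg_right ?_ (pow_nonneg (add_nonneg (hp 0) (hp 1)) _)
    apply Real.exp_le_exp.mpr
    have h1 : 2 * ((n - 3 : ℕ) : ℝ) ≤ ((Tu ∪ Tv).card : ℝ) := by exact_mod_cast hcard
    have h3 := mul_le_mul_of_nonneg_left h1 (hp 0)
    have h4 : 0 ≤ p 0 * ((Tu ∪ Tv).card : ℝ) := mul_nonneg (hp 0) (Nat.cast_nonneg _)
    have h2 := exp_neg_two_le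
    nlinarith
  · intro c hc
    exact hc.2.2
  · rintro c ⟨h1, h2, -⟩
    have h1' := Nat.lt_ceil.mp h1
    have h2' := Nat.lt_ceil.mp h2
    have h3 : ((Tu ∪ Tv).filter (fun e => c e ∈ ({0} : Finset (Fin 3)))).card ≤
        (nbrs c {0} u).card + (nbrs c {0} v).card := by
      rw [Finset.filter_union]
      refine (Finset.card_union_le _ _).trans (Nat.add_le_add ?_ ?_)
      · exact hsub u hu c
      · exact hsub v hv c
    have h3' : (((Tu ∪ Tv).filter (fun e => c e ∈ ({0} : Finset (Fin 3)))).card : ℝ) ≤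
        (nbrs c {0} u).card + (nbrs c {0} v).card := by exact_mod_cast h3
    linarith

lemma Pr_smallEdge {n : ℕ} {p : Fin 3 → ℝ} (hp : ∀ i, 0 ≤ p i) (hp1 : ∑ i, p i = 1) (L : ℝ) :
    Pr p (fun c : Sym2 (Fin n) → Fin 3 => ∃ q ∈ (Finset.univ : Finset (Fin n × Fin n)),
      q.1 ≠ q.2 ∧ (nbrs c {0} q.1).card < ⌈L / 20⌉₊ ∧
        (nbrs c {0} q.2).card < ⌈L / 20⌉₊ ∧ c s(q.1, q.2) ≠ 2) ≤
      n ^ 2 * (Real.exp (L / 5 - 1.72 * p 0 * (n - 3 : ℕ)) * (p 0 + p 1)) := by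
  refine (Pr_exists hp _ _).trans ?_
  have : ∀ q ∈ (Finset.univ : Finset (Fin n × Fin n)),
      Pr p (fun c : Sym2 (Fin n) → Fin 3 => q.1 ≠ q.2 ∧ (nbrs c {0} q.1).card < ⌈L / 20⌉₊ ∧
        (nbrs c {0} q.2).card < ⌈L / 20⌉₊ ∧ c s(q.1, q.2) ≠ 2) ≤
      Real.exp (L / 5 - 1.72 * p 0 * (n - 3 : ℕ)) * (p 0 + p 1) := by
    rintro ⟨u, v⟩ -
    by_cases huv : u = v
    · refine le_trans (le_of_eq ?_) (mul_nonneg (Real.exp_pos _).le (add_nonneg (hp 0) (hp 1)))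
      unfold Pr
      refine Finset.sum_eq_zero fun c _ => ?_
      rw [if_neg]
      tauto
    have h := Pr_small_pair hp hp1 L u v huv {u, v} (by simp) (by simp)
      (le_trans Finset.card_le_two (by norm_num)) {s(u, v)} (by
        intro e he
        rw [Finset.mem_singleton] at he
        rw [he, Finset.mk_mem_sym2_iff]
        simp)
    rw [Finset.card_singleton, pow_one] at h
    refine le_trans (Pr_mono hp ?_) h
    rintro c ⟨-, h1, h2, h3⟩
    exact ⟨h1, h2, by simpa using h3⟩
  refine (Finset.sum_le_sum this).trans ?_
  rw [Finset.sum_const, nsmul_eq_mul]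
  simp [sq]

lemma Pr_smallPath {n : ℕ} {p : Fin 3 → ℝ} (hp : ∀ i, 0 ≤ p i) (hp1 : ∑ i, p i = 1) (L : ℝ) :
    Pr p (fun c : Sym2 (Fin n) → Fin 3 => ∃ q ∈ (Finset.univ : Finset (Fin n × Fin n × Fin n)),
      q.1 ≠ q.2.1 ∧ q.1 ≠ q.2.2 ∧ q.2.1 ≠ q.2.2 ∧ (nbrs c {0} q.1).card < ⌈L / 20⌉₊ ∧
        (nbrs c {0} q.2.1).card < ⌈L / 20⌉₊ ∧ c s(q.1, q.2.2) ≠ 2 ∧ c s(q.2.1, q.2.2) ≠ 2) ≤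
      n ^ 3 * (Real.exp (L / 5 - 1.72 * p 0 * (n - 3 : ℕ)) * (p 0 + p 1) ^ 2) := by
  refine (Pr_exists hp _ _).trans ?_
  have : ∀ q ∈ (Finset.univ : Finset (Fin n × Fin n × Fin n)),
      Pr p (fun c : Sym2 (Fin n) → Fin 3 =>
        q.1 ≠ q.2.1 ∧ q.1 ≠ q.2.2 ∧ q.2.1 ≠ q.2.2 ∧ (nbrs c {0} q.1).card < ⌈L / 20⌉₊ ∧
        (nbrs c {0} q.2.1).card < ⌈L / 20⌉₊ ∧ c s(q.1, q.2.2) ≠ 2 ∧ c s(q.2.1, q.2.2) ≠ 2) ≤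
      Real.exp (L / 5 - 1.72 * p 0 * (n - 3 : ℕ)) * (p 0 + p 1) ^ 2 := by
    rintro ⟨u, v, w⟩ -
    by_cases huv : u ≠ v ∧ u ≠ w ∧ v ≠ w
    swap
    · refine le_trans (le_of_eq ?_) (mul_nonneg (Real.exp_pos _).le
        (pow_nonneg (add_nonneg (hp 0) (hp 1)) _))
      unfold Pr
      refine Finset.sum_eq_zero fun c _ => ?_
      rw [if_neg]
      tauto
    obtain ⟨huv, huw, hvw⟩ := huv
    have hne : s(u, w) ≠ s(v, w) := by
      intro h
      rw [Sym2.eq_iff] at h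
      rcases h with ⟨h, -⟩ | ⟨h, -⟩
      · exact huv h
      · exact huw h
    have h := Pr_small_pair hp hp1 L u v huv {u, v, w} (by simp) (by simp)
      Finset.card_le_three {s(u, w), s(v, w)} (by
        intro e he
        rw [Finset.mem_insert, Finset.mem_singleton] at he
        rcases he with he | he <;> rw [he, Finset.mk_mem_sym2_iff] <;> simp)
    rw [Finset.card_pair hne] at h
    refine le_trans (Pr_mono hp ?_) h
    rintro c ⟨-, -, -, h1, h2, h3, h4⟩
    exact ⟨h1, h2, by simpa using ⟨h3, h4⟩⟩
  refine (Finset.sum_le_sum this).trans ?_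
  rw [Finset.sum_const, nsmul_eq_mul]
  refine le_of_eq ?_
  congr 1
  simp only [Finset.card_univ, Fintype.card_prod, Fintype.card_fin]
  push_cast
  ring

lemma Pr_sparse {n m : ℕ} {p : Fin 3 → ℝ} (hp : ∀ i, 0 ≤ p i) (hp1 : ∑ i, p i = 1) (L : ℝ)
    (hm : p 0 * Real.exp 240 * (4 * m) ≤ L) :
    Pr p (fun c : Sym2 (Fin n) → Fin 3 => ∃ S ∈ (Finset.univ.erase ∅ : Finset (Finset (Fin n))),
      S.card ≤ 4 * m ∧ ⌈L / 20⌉₊ * S.card ≤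
        4 * (S.sym2.filter (fun e => c e ∈ ({0} : Finset (Fin 3)))).card) ≤
      Real.exp (n * Real.exp (- (2 * L))) - 1 := by
  refine (Pr_exists hp _ _).trans ?_
  have : ∀ S ∈ (Finset.univ.erase ∅ : Finset (Finset (Fin n))),
      Pr p (fun c : Sym2 (Fin n) → Fin 3 => S.card ≤ 4 * m ∧ ⌈L / 20⌉₊ * S.card ≤
        4 * (S.sym2.filter (fun e => c e ∈ ({0} : Finset (Fin 3)))).card) ≤
      Real.exp (- (2 * L)) ^ S.card * 1 ^ (Fintype.card (Fin n) - S.card) := by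
    intro S hS
    rw [one_pow, mul_one]
    have hS0 : 1 ≤ S.card := Finset.card_pos.mpr
      (Finset.nonempty_iff_ne_empty.mpr (Finset.ne_of_mem_erase hS))
    by_cases hSm : S.card ≤ 4 * m
    swap
    · refine le_trans (le_of_eq ?_) (pow_nonneg (Real.exp_pos _).le _)
      unfold Pr
      refine Finset.sum_eq_zero fun c _ => ?_
      rw [if_neg]
      tauto
    have h := Pr_chernoff hp hp1 (fun c : Sym2 (Fin n) → Fin 3 => S.card ≤ 4 * m ∧
        ⌈L / 20⌉₊ * S.card ≤ 4 * (S.sym2.filter (fun e => c e ∈ ({0} : Finset (Fin 3)))).card)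
      ∅ S.sym2 (by simp) {0} (-240) (L / 80 * S.card) (by simp) ?_
    · refine h.trans ?_
      rw [Finset.card_empty, pow_zero, mul_one, ← Real.exp_add, Finset.sum_singleton,
        ← Real.exp_nat_mul, neg_neg]
      apply Real.exp_le_exp.mpr
      have hT : S.sym2.card ≤ S.card * (4 * m) := by
        rw [Finset.card_sym2]
        have h1 : (S.card + 1).choose 2 ≤ S.card * S.card := by
          rw [Nat.choose_two_right]
          apply Nat.div_le_of_le_mul
          simp only [Nat.add_sub_cancel]
          nlinarith
        exact h1.trans (Nat.mul_le_mul_left _ hSm)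
      have hT' : (S.sym2.card : ℝ) ≤ S.card * (4 * m) := by exact_mod_cast hT
      have e1 : p 0 * (Real.exp 240 - 1) * (S.sym2.card : ℝ) ≤
          p 0 * Real.exp 240 * (S.card * (4 * m)) := by
        refine mul_le_mul ?_ hT' (Nat.cast_nonneg _) (mul_nonneg (hp 0) (Real.exp_pos _).le)
        exact mul_le_mul_of_nonneg_left (by linarith) (hp 0)
      have e2 : p 0 * Real.exp 240 * (S.card * (4 * m)) ≤ S.card * L := by
        have := mul_le_mul_of_nonneg_left hm (Nat.cast_nonneg (α := ℝ) S.card)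
        calc _ = (S.card : ℝ) * (p 0 * Real.exp 240 * (4 * m)) := by ring
          _ ≤ _ := this
      linarith
    · rintro c ⟨-, hc⟩
      have h1 : L / 20 ≤ (⌈L / 20⌉₊ : ℝ) := Nat.le_ceil _
      have h2 : (⌈L / 20⌉₊ : ℝ) * S.card ≤
        4 * (S.sym2.filter (fun e => c e ∈ ({0} : Finset (Fin 3)))).card := by exact_mod_cast hc
      have h3 := mul_le_mul_of_nonneg_right h1 (Nat.cast_nonneg (α := ℝ) S.card)
      linarith
  refine (Finset.sum_le_sum this).trans ?_
  have hsum := Fintype.sum_pow_mul_eq_add_pow (Fin n) (Real.exp (- (2 * L))) 1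
  rw [← Finset.add_sum_erase _ _ (Finset.mem_univ (∅ : Finset (Fin n)))] at hsum
  simp only [Finset.card_empty, pow_zero, one_pow, one_mul, Fintype.card_fin] at hsum
  have hb : (Real.exp (- (2 * L)) + 1) ^ n ≤ Real.exp (n * Real.exp (- (2 * L))) := by
    rw [Real.exp_nat_mul]
    exact pow_le_pow_left₀ (by positivity) (Real.add_one_le_exp _) _
  simp only [one_pow]
  linarith


/-! ### Isolated vertices: second moment -/

lemma sum_avoid {ι : Type*} [Fintype ι] [DecidableEq ι] {p : Fin 3 → ℝ}
    (hp1 : ∑ i, p i = 1) (T : Finset ι) :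
    ∑ c : ι → Fin 3, (∏ e, p (c e)) * (if ∀ e ∈ T, c e ≠ 0 then (1 : ℝ) else 0)
      = (1 - p 0) ^ T.card := by
  have h1 : ∀ c : ι → Fin 3, (if ∀ e ∈ T, c e ≠ 0 then (1 : ℝ) else 0) =
      ∏ e, (if e ∈ T then (if c e = 0 then (0 : ℝ) else 1) else 1) := by
    intro c
    split_ifs with h
    · symm
      refine Finset.prod_eq_one fun e _ => ?_
      by_cases he : e ∈ T
      · simp [he, h e he]
      · simp [he]
    · push Not at h
      obtain ⟨e, he, hc⟩ := h
      symm
      refine Finset.prod_eq_zero (Finset.mem_univ e) ?_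
      simp [he, hc]
  simp only [h1, ← Finset.prod_mul_distrib]
  rw [sum_prod_colour (fun e i => p i * (if e ∈ T then (if i = 0 then (0 : ℝ) else 1) else 1))]
  have h2 : ∀ e, ∑ i, p i * (if e ∈ T then (if i = 0 then (0 : ℝ) else 1) else 1) =
      if e ∈ T then 1 - p 0 else 1 := by
    intro e
    rw [Fin.sum_univ_three] at hp1
    by_cases he : e ∈ T
    · simp [he, Fin.sum_univ_three]; linarith
    · simp [he, Fin.sum_univ_three]; linarith
  simp only [h2]
  rw [Finset.prod_ite_mem, Finset.univ_inter, Finset.prod_const]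

lemma card_star_union {n : ℕ} (u v : Fin n) (huv : u ≠ v) :
    2 * n - 3 ≤ (starAt u ∪ starAt v).card := by
  have h := Finset.card_union_add_card_inter (starAt u) (starAt v)
  have h2 : (starAt u ∩ starAt v).card ≤ 1 := by
    rw [Finset.card_le_one]
    have : ∀ e ∈ starAt u ∩ starAt v, e = s(u, v) := by
      intro e he
      rw [Finset.mem_inter] at he
      simp only [starAt, Finset.mem_image] at he
      obtain ⟨⟨y, -, rfl⟩, ⟨z, -, h⟩⟩ := he
      rw [Sym2.eq_iff] at h
      rcases h with ⟨h, -⟩ | ⟨h, -⟩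
      · exact absurd h.symm huv
      · rw [h]
    intro e he f hf
    rw [this e he, this f hf]
  rw [card_starAt, card_starAt] at h
  omega

lemma Pr_isolated {n : ℕ} (hn : 2 ≤ n) {p : Fin 3 → ℝ} (hp : ∀ i, 0 ≤ p i) (hp1 : ∑ i, p i = 1)
    (hp0 : p 0 < 1) :
    Pr p (fun c : Sym2 (Fin n) → Fin 3 => ∀ v, nbrs c {0} v ≠ ∅) ≤
      1 / (n * (1 - p 0) ^ (n - 1)) + p 0 / (1 - p 0) := by
  classical
  set Q := 1 - p 0 with hQ
  have hQ0 : 0 < Q := by linarith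
  have hQ1 : Q ≤ 1 := by linarith [hp 0]
  set μ := (n : ℝ) * Q ^ (n - 1) with hμ
  have hn0 : (0 : ℝ) < n := by exact_mod_cast (by omega : 0 < n)
  have hμ0 : 0 < μ := by positivity
  let w : (Sym2 (Fin n) → Fin 3) → ℝ := fun c => ∏ e, p (c e)
  have hw : ∀ c, 0 ≤ w c := fun c => Finset.prod_nonneg fun e _ => hp _
  have hwsum : ∑ c, w c = 1 := by
    have := sum_prod_colour (ι := Sym2 (Fin n)) (fun _ => p)
    simp only [hp1, Finset.prod_const_one] at this
    exact this
  let I : Fin n → (Sym2 (Fin n) → Fin 3) → ℝ :=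
    fun v c => if ∀ e ∈ starAt v, c e ≠ 0 then (1 : ℝ) else 0
  let X : (Sym2 (Fin n) → Fin 3) → ℝ := fun c => ∑ v, I v c
  have hEI : ∀ v, ∑ c, w c * I v c = Q ^ (n - 1) := by
    intro v
    have := sum_avoid hp1 (starAt v)
    rw [card_starAt] at this
    exact this
  have hEII : ∀ u v, ∑ c, w c * (I u c * I v c) = Q ^ (starAt u ∪ starAt v).card := by
    intro u v
    rw [← sum_avoid hp1 (starAt u ∪ starAt v)]
    refine Finset.sum_congr rfl fun c _ => ?_
    congr 1
    simp only [I, Finset.mem_union, or_imp, forall_and]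
    split_ifs <;> first | (norm_num; done) | (exfalso; tauto)
  have hEX : ∑ c, w c * X c = μ := by
    simp only [X, Finset.mul_sum]
    rw [Finset.sum_comm]
    simp only [hEI]
    simp [hμ]
  have hEXX : ∑ c, w c * (X c) ^ 2 ≤ μ + n ^ 2 * Q ^ (2 * n - 3) := by
    have e1 : ∑ c, w c * (X c) ^ 2 = ∑ u : Fin n, ∑ v : Fin n, Q ^ (starAt u ∪ starAt v).card := by
      simp only [← hEII]
      have hX : ∀ c, w c * (X c) ^ 2 = ∑ u : Fin n, ∑ v : Fin n, w c * (I u c * I v c) := by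
        intro c
        simp only [X, sq]
        rw [Finset.sum_mul_sum, Finset.mul_sum]
        exact Finset.sum_congr rfl fun u _ => Finset.mul_sum _ _ _
      simp only [hX]
      rw [Finset.sum_comm]
      refine Finset.sum_congr rfl fun u _ => ?_
      rw [Finset.sum_comm]
    rw [e1]
    have e2 : ∀ u v : Fin n, Q ^ (starAt u ∪ starAt v).card ≤
        (if u = v then Q ^ (n - 1) else 0) + Q ^ (2 * n - 3) := by
      intro u v
      by_cases h : u = v
      · subst h
        simp only [Finset.union_self, card_starAt, if_true]
        have : 0 ≤ Q ^ (2 * n - 3) := by positivity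
        linarith
      · simp only [h, if_false, zero_add]
        exact pow_le_pow_of_le_one hQ0.le hQ1 (card_star_union u v h)
    refine (Finset.sum_le_sum fun u _ => Finset.sum_le_sum fun v _ => e2 u v).trans ?_
    simp only [Finset.sum_add_distrib, Finset.sum_ite_eq, Finset.mem_univ, if_true,
      Finset.sum_const, Finset.card_univ, Fintype.card_fin, nsmul_eq_mul]
    rw [hμ]
    apply le_of_eq; ring
  have hcheb : Pr p (fun c : Sym2 (Fin n) → Fin 3 => ∀ v, nbrs c {0} v ≠ ∅) * μ ^ 2 ≤
      ∑ c, w c * (X c - μ) ^ 2 := by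
    unfold Pr
    rw [Finset.sum_mul]
    refine Finset.sum_le_sum fun c _ => ?_
    split_ifs with h
    · have hX : X c = 0 := by
        simp only [X]
        refine Finset.sum_eq_zero fun v _ => ?_
        simp only [I]
        rw [if_neg]
        intro hall
        apply h v
        rw [Finset.eq_empty_iff_forall_notMem]
        intro y hy
        simp only [nbrs, Finset.mem_filter, Finset.mem_univ, true_and, Finset.mem_singleton] at hy
        refine hall s(v, y) ?_ hy.2
        simp only [starAt, Finset.mem_image]
        exact ⟨y, by simp [hy.1], rfl⟩
      rw [hX]
      simp [w]
    · rw [zero_mul]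
      exact mul_nonneg (hw c) (sq_nonneg _)
  have hvar : ∑ c, w c * (X c - μ) ^ 2 = ∑ c, w c * (X c) ^ 2 - μ ^ 2 := by
    have : ∀ c, w c * (X c - μ) ^ 2 = w c * (X c) ^ 2 - 2 * μ * (w c * X c) + μ ^ 2 * w c := by
      intro c; ring
    simp only [this, Finset.sum_add_distrib, Finset.sum_sub_distrib, ← Finset.mul_sum, hEX, hwsum]
    ring
  have hpow : Q ^ (2 * n - 3) * Q = (Q ^ (n - 1)) ^ 2 := by
    rw [← pow_succ, ← pow_mul]
    congr 1; omega
  have hμ2 : (n : ℝ) ^ 2 * Q ^ (2 * n - 3) = μ ^ 2 / Q := by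
    rw [hμ, mul_pow, ← hpow]
    field_simp
  have hfin : Pr p (fun c : Sym2 (Fin n) → Fin 3 => ∀ v, nbrs c {0} v ≠ ∅) * μ ^ 2 ≤
      (1 / μ + p 0 / Q) * μ ^ 2 := by
    have e : (1 / μ + p 0 / Q) * μ ^ 2 = μ + μ ^ 2 / Q - μ ^ 2 := by
      have : p 0 = 1 - Q := by rw [hQ]; ring
      rw [this]
      field_simp
      ring
    rw [e]
    linarith
  exact le_of_mul_le_mul_right hfin (by positivity)

/-! ### Assembling -/

lemma Pr_not_good {n m : ℕ} {p : Fin 3 → ℝ} (hp : ∀ i, 0 ≤ p i) (hp1 : ∑ i, p i = 1)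
    (L : ℝ) (hn : 2 ≤ n) (hp0 : p 0 < 1) (hm : p 0 * Real.exp 240 * (4 * m) ≤ L) :
    Pr p (fun c : Sym2 (Fin n) → Fin 3 => ¬ GoodColouring m ⌈L / 20⌉₊ c) ≤
      (1 / (n * (1 - p 0) ^ (n - 1)) + p 0 / (1 - p 0)) +
      (n * Real.exp (2 - 0.86 * (p 0 + p 1) * (n - 1 : ℕ)) +
      (4 ^ n * Real.exp (- (0.86 * p 0 * m ^ 2)) +
      (n ^ 2 * (Real.exp (L / 5 - 1.72 * p 0 * (n - 3 : ℕ)) * (p 0 + p 1)) +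
      (n ^ 3 * (Real.exp (L / 5 - 1.72 * p 0 * (n - 3 : ℕ)) * (p 0 + p 1) ^ 2) +
      (Real.exp (n * Real.exp (- (2 * L))) - 1))))) := by
  refine le_trans (Pr_mono hp ?_) ((Pr_or hp _ _).trans (add_le_add (Pr_isolated hn hp hp1 hp0)
    ((Pr_or hp _ _).trans (add_le_add (Pr_mindeg hp hp1)
    ((Pr_or hp _ _).trans (add_le_add (Pr_dense hp hp1)
    ((Pr_or hp _ _).trans (add_le_add (Pr_smallEdge hp hp1 L)
    ((Pr_or hp _ _).trans (add_le_add (Pr_smallPath hp hp1 L) (Pr_sparse hp hp1 L hm)))))))))))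
  intro c hc
  by_contra hcon
  push Not at hcon
  obtain ⟨h1, h2, h3, h4, h5, h6⟩ := hcon
  apply hc
  refine ⟨h1, fun v => h2 v (Finset.mem_univ _), ?_, ?_, ?_, ?_⟩
  · intro X Y hd hX hY
    obtain ⟨i, hi, j, hj, h⟩ := h3 (X, Y) (Finset.mem_univ _) hd hX hY
    exact ⟨i, hi, j, hj, h⟩
  · intro u v huv hu hv
    exact h4 (u, v) (Finset.mem_univ _) huv hu hv
  · intro u v w huv huw hvw hu hv h
    exact h5 (u, v, w) (Finset.mem_univ _) huv huw hvw hu hv h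
  · intro S hS hSm
    exact h6 S (Finset.mem_erase.mpr ⟨hS.ne_empty, Finset.mem_univ _⟩) hSm


/-- The error term, as a function of `log n`. -/
noncomputable def errTerm (L : ℝ) : ℝ :=
  (Real.exp (-(0.1 * L)) + 2 * (L * Real.exp (-L))) + (Real.exp (2 - 0.5 * L) + (Real.exp (-L) +
    (2 * (L * Real.exp (-(0.1 * L))) + (4 * (L ^ 2 * Real.exp (-(0.1 * L))) +
      (Real.exp (Real.exp (-L)) - 1)))))

lemma tendsto_errTerm : Filter.Tendsto errTerm Filter.atTop (nhds 0) := by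
  have hk : ∀ k : ℕ, ∀ a : ℝ, 0 < a → Filter.Tendsto (fun L : ℝ => L ^ k * Real.exp (-(a * L)))
      Filter.atTop (nhds 0) := by
    intro k a ha
    have h := (Real.tendsto_pow_mul_exp_neg_atTop_nhds_zero k).comp
      (Filter.tendsto_id.const_mul_atTop ha)
    have h2 := h.const_mul ((a ^ k)⁻¹)
    rw [mul_zero] at h2
    refine h2.congr fun L => ?_
    simp only [Function.comp, id]
    rw [mul_pow]
    field_simp
  have t1 := hk 0 0.1 (by norm_num)
  have t2 := hk 1 1 (by norm_num)
  have t3 := (hk 0 0.5 (by norm_num)).const_mul (Real.exp 2)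
  have t4 := hk 0 1 (by norm_num)
  have t5 := hk 1 0.1 (by norm_num)
  have t6 := hk 2 0.1 (by norm_num)
  simp only [pow_zero, pow_one, one_mul] at t1 t2 t3 t4 t5
  have t7 := (Real.continuous_exp.tendsto 0).comp t4
  have t8 := t7.sub_const 1
  have := (t1.add (t2.const_mul 2)).add (t3.add (t4.add ((t5.const_mul 2).add
    ((t6.const_mul 4).add t8))))
  simp only [mul_zero, add_zero, Real.exp_zero, sub_self] at this
  refine this.congr fun L => ?_
  unfold errTerm
  simp only [Function.comp]
  rw [← Real.exp_add]
  ring_nf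

/-- The colour law. -/
noncomputable def law (n : ℕ) : Fin 3 → ℝ :=
  ![4 / 5 * Real.log n / n, 6 / 5 * Real.log n / n, 1 - 2 * Real.log n / n]

set_option maxHeartbeats 1000000 in
lemma bound_all {n : ℕ} {ε : ℝ} (hε : ε = Real.exp (-240) / 8)
    (hn : 100 ≤ n) (hL : 80 ≤ Real.log n) (hLn : Real.log n ≤ n / 8)
    (hεn : 1 ≤ ε * n) (hεL : 3 ≤ 0.688 * ε ^ 2 * Real.log n) :
    (∀ i, 0 ≤ law n i) ∧ ∑ i, law n i = 1 ∧
    Pr (law n) (fun c : Sym2 (Fin n) → Fin 3 =>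
      ¬ GoodColouring ⌈ε * n⌉₊ ⌈Real.log n / 20⌉₊ c) ≤ errTerm (Real.log n) := by
  set L := Real.log n with hLdef
  have hn0 : (0 : ℝ) < n := by exact_mod_cast (by omega : 0 < n)
  have hn100 : (100 : ℝ) ≤ n := by exact_mod_cast hn
  have hexpL : Real.exp L = n := Real.exp_log hn0
  have hL0 : 0 < L := by linarith
  have hnexp : ∀ y : ℝ, (n : ℝ) * Real.exp y = Real.exp (L + y) := by
    intro y; rw [Real.exp_add, hexpL]
  set r := L / n with hr
  have hr0 : 0 < r := by positivity
  have hr8 : r ≤ 1 / 8 := by rw [hr, div_le_iff₀ hn0]; linarith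
  have hrn : r * n = L := by rw [hr]; field_simp
  have hε0 : 0 < ε := by rw [hε]; positivity
  have e0 : law n 0 = 4 / 5 * r := by simp [law, hr, hLdef]; ring
  have e1 : law n 1 = 6 / 5 * r := by simp [law, hr, hLdef]; ring
  have e2 : law n 2 = 1 - 2 * r := by simp [law, hr, hLdef]; ring
  have hp : ∀ i, 0 ≤ law n i := by
    intro i
    fin_cases i
    · change 0 ≤ law n 0; rw [e0]; positivity
    · change 0 ≤ law n 1; rw [e1]; positivity
    · change 0 ≤ law n 2; rw [e2]; linarith
  have hp1 : ∑ i, law n i = 1 := by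
    rw [Fin.sum_univ_three, e0, e1, e2]; ring
  refine ⟨hp, hp1, ?_⟩
  have hceil : (⌈ε * n⌉₊ : ℝ) ≤ 2 * (ε * n) := by
    have := Nat.ceil_lt_add_one (mul_nonneg hε0.le hn0.le)
    linarith
  have hceil' : ε * n ≤ (⌈ε * n⌉₊ : ℝ) := Nat.le_ceil _
  have hee : Real.exp 240 * ε = 1 / 8 := by
    rw [hε, Real.exp_neg]
    have := Real.exp_pos 240
    field_simp
  have hm : law n 0 * Real.exp 240 * (4 * (⌈ε * n⌉₊ : ℝ)) ≤ L := by
    rw [e0]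
    calc 4 / 5 * r * Real.exp 240 * (4 * (⌈ε * n⌉₊ : ℝ))
        ≤ 4 / 5 * r * Real.exp 240 * (4 * (2 * (ε * n))) := by gcongr
      _ = 32 / 5 * (Real.exp 240 * ε) * (r * n) := by ring
      _ ≤ L := by rw [hee, hrn]; linarith
  have hb := Pr_not_good hp hp1 L (by omega : 2 ≤ n) (by rw [e0]; linarith) hm
  refine hb.trans ?_
  have e01 : law n 0 + law n 1 = 2 * r := by rw [e0, e1]; ring
  rw [e01, e0]
  have hrexp : r = L * Real.exp (-L) := by
    rw [Real.exp_neg, hexpL, hr]; ring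
  have hQ : (9 : ℝ) / 10 ≤ 1 - 4 / 5 * r := by linarith
  unfold errTerm
  refine add_le_add (add_le_add ?_ ?_) (add_le_add ?_ (add_le_add ?_ (add_le_add ?_
    (add_le_add ?_ ?_))))
  · -- expected number of isolated vertices is large
    rw [Real.exp_neg, one_div]
    refine inv_anti₀ (Real.exp_pos _) ?_
    have h1 : Real.exp (- (9 / 10 * r)) ≤ 1 - 4 / 5 * r := by
      rw [Real.exp_neg, inv_le_comm₀ (Real.exp_pos _) (by linarith)]
      refine le_trans ?_ (Real.add_one_le_exp _)
      rw [inv_eq_one_div, div_le_iff₀ (by linarith)]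
      nlinarith
    have h2 : Real.exp (- (9 / 10 * r)) ^ (n - 1) ≤ (1 - 4 / 5 * r) ^ (n - 1) :=
      pow_le_pow_left₀ (Real.exp_pos _).le h1 _
    have h3 : Real.exp (-(0.9 * L)) ≤ Real.exp (- (9 / 10 * r)) ^ (n - 1) := by
      rw [← Real.exp_nat_mul]
      apply Real.exp_le_exp.mpr
      rw [Nat.cast_sub (by omega)]
      push_cast
      linarith
    calc Real.exp (0.1 * L) = n * Real.exp (-(0.9 * L)) := by
          rw [hnexp]; congr 1; ring
      _ ≤ _ := mul_le_mul_of_nonneg_left (h3.trans h2) hn0.le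
  · rw [← hrexp, div_le_iff₀ (by linarith)]
    nlinarith
  · rw [hnexp]
    apply Real.exp_le_exp.mpr
    rw [Nat.cast_sub (by omega)]
    push_cast
    linarith
  · have h4 : (4 : ℝ) ≤ Real.exp 2 := by
      have h := Real.exp_one_gt_d9
      have h2 : Real.exp 2 = Real.exp 1 * Real.exp 1 := by rw [← Real.exp_add]; norm_num
      nlinarith
    have h5 : (4 : ℝ) ^ n ≤ Real.exp (n * 2) := by
      rw [Real.exp_nat_mul]
      exact pow_le_pow_left₀ (by norm_num) h4 _
    refine (mul_le_mul_of_nonneg_right h5 (Real.exp_pos _).le).trans ?_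
    rw [← Real.exp_add]
    apply Real.exp_le_exp.mpr
    have h6 : (ε * n) ^ 2 ≤ (⌈ε * n⌉₊ : ℝ) ^ 2 := pow_le_pow_left₀ (by positivity) hceil' 2
    have h7 : 0.86 * (4 / 5 * r) * (ε * n) ^ 2 ≤ 0.86 * (4 / 5 * r) * (⌈ε * n⌉₊ : ℝ) ^ 2 :=
      mul_le_mul_of_nonneg_left h6 (by positivity)
    have h8 : 0.86 * (4 / 5 * r) * (ε * n) ^ 2 = (0.688 * ε ^ 2 * L) * n := by
      rw [← hrn]; ring
    have h9 : 3 * (n : ℝ) ≤ (0.688 * ε ^ 2 * L) * n := mul_le_mul_of_nonneg_right hεL hn0.le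
    linarith
  · have h : Real.exp (L / 5 - 1.72 * (4 / 5 * r) * ((n - 3 : ℕ) : ℝ)) ≤ Real.exp (-(1.1 * L)) := by
      apply Real.exp_le_exp.mpr
      rw [Nat.cast_sub (by omega)]
      push_cast
      linarith
    calc (n : ℝ) ^ 2 * (Real.exp (L / 5 - 1.72 * (4 / 5 * r) * ((n - 3 : ℕ) : ℝ)) * (2 * r))
        ≤ (n : ℝ) ^ 2 * (Real.exp (-(1.1 * L)) * (2 * r)) := by gcongr
      _ = 2 * (r * n) * (n * Real.exp (-(1.1 * L))) := by ring
      _ = 2 * L * Real.exp (-(0.1 * L)) := by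
          rw [hrn]; congr 1
          rw [hnexp]; congr 1; ring
      _ ≤ _ := le_of_eq (by ring)
  · have h : Real.exp (L / 5 - 1.72 * (4 / 5 * r) * ((n - 3 : ℕ) : ℝ)) ≤ Real.exp (-(1.1 * L)) := by
      apply Real.exp_le_exp.mpr
      rw [Nat.cast_sub (by omega)]
      push_cast
      linarith
    calc (n : ℝ) ^ 3 * (Real.exp (L / 5 - 1.72 * (4 / 5 * r) * ((n - 3 : ℕ) : ℝ)) * (2 * r) ^ 2)
        ≤ (n : ℝ) ^ 3 * (Real.exp (-(1.1 * L)) * (2 * r) ^ 2) := by gcongr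
      _ = 4 * (r * n) ^ 2 * (n * Real.exp (-(1.1 * L))) := by ring
      _ = 4 * L ^ 2 * Real.exp (-(0.1 * L)) := by
          rw [hrn]; congr 1
          rw [hnexp]; congr 1; ring
      _ ≤ _ := le_of_eq (by ring)
  · have : (n : ℝ) * Real.exp (-(2 * L)) = Real.exp (-L) := by
      rw [hnexp]; congr 1; ring
    rw [this]


/-- Whp, at every time of the random graph process at which all degrees are at least two,
the whole point set is reconstructible. -/
theorem statement5
    (x : (n : ℕ) → Fin n → ℝ) (hx : ∀ n, Function.Injective (x n)) :
    Filter.Tendsto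
      (fun (n : ℕ) => processMeasure n
        {σ | ∀ t : ℕ, t ≤ n.choose 2 → (∀ u : Fin n, 2 ≤ degree (Gt σ t) u) →
          Reconstructible (x n) (Gt σ t) Set.univ})
      Filter.atTop (nhds 1) := by
  set Good : (n : ℕ) → Set (EdgeOrd n) := fun n =>
    {σ | ∀ t : ℕ, t ≤ n.choose 2 → (∀ u : Fin n, 2 ≤ degree (Gt σ t) u) →
          Reconstructible (x n) (Gt σ t) Set.univ} with hGood
  change Filter.Tendsto (fun n => processMeasure n (Good n)) Filter.atTop (nhds 1)
  have hprob : ∀ n, MeasureTheory.IsProbabilityMeasure (processMeasure n) := by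
    intro n
    unfold processMeasure
    infer_instance
  have hlog : Filter.Tendsto (fun n : ℕ => Real.log n) Filter.atTop Filter.atTop :=
    Real.tendsto_log_atTop.comp tendsto_natCast_atTop_atTop
  have hcast : Filter.Tendsto (fun n : ℕ => (n : ℝ)) Filter.atTop Filter.atTop :=
    tendsto_natCast_atTop_atTop
  obtain ⟨ε, hε⟩ : ∃ ε, ε = Real.exp (-240) / 8 := ⟨_, rfl⟩
  have hε0 : 0 < ε := by rw [hε]; positivity
  have hε1 : ε ≤ 1 / 8 := by
    rw [hε]
    have : Real.exp (-240) ≤ 1 := Real.exp_le_one_iff.mpr (by norm_num)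
    linarith
  have hevent : ∀ᶠ n : ℕ in Filter.atTop,
      (processMeasure n (Good n)ᶜ).toReal ≤ errTerm (Real.log n) := by
    have hlittle : ∀ᶠ n : ℕ in Filter.atTop, Real.log n ≤ n / 8 := by
      have h := (Real.isLittleO_log_id_atTop.comp_tendsto hcast).bound
        (by norm_num : (0 : ℝ) < 1 / 8)
      filter_upwards [h] with n hn
      simp only [Function.comp, id, Real.norm_eq_abs, Nat.abs_cast] at hn
      have := le_abs_self (Real.log n)
      linarith
    filter_upwards [Filter.eventually_ge_atTop 100, hlog.eventually_ge_atTop 80, hlittle,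
      (hcast.const_mul_atTop hε0).eventually_ge_atTop 1,
      (hlog.const_mul_atTop (by positivity : 0 < 0.688 * ε ^ 2)).eventually_ge_atTop 3]
      with n h1 h2 h3 h4 h5
    obtain ⟨hp, hp1, hb⟩ := bound_all hε h1 h2 h3 h4 h5
    refine le_trans (transfer hp hp1 _ _ ?_) hb
    intro c σ hσ hbad hc
    apply hbad
    intro t _ hdeg
    have hm0 : 0 < ⌈ε * (n : ℝ)⌉₊ := Nat.ceil_pos.mpr (by linarith)
    have hm : 2 * ⌈ε * (n : ℝ)⌉₊ ≤ n := by
      have h6 := Nat.ceil_lt_add_one (by linarith : 0 ≤ ε * (n : ℝ))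
      have h7 : (n : ℝ) * ε ≤ n * (1 / 8) := mul_le_mul_of_nonneg_left hε1 (Nat.cast_nonneg _)
      have h8 : (2 * ⌈ε * (n : ℝ)⌉₊ : ℝ) ≤ n := by linarith
      exact_mod_cast h8
    have hD : 4 ≤ ⌈Real.log n / 20⌉₊ := by
      have : (4 : ℝ) ≤ (⌈Real.log n / 20⌉₊ : ℝ) := le_trans (by linarith) (Nat.le_ceil _)
      exact_mod_cast this
    exact good_process hD hm hm0 hc (x n) (hx n) σ hσ t hdeg
  have htend : Filter.Tendsto (fun n => (processMeasure n (Good n)ᶜ).toReal) Filter.atTop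
      (nhds 0) :=
    squeeze_zero' (Filter.Eventually.of_forall fun n => ENNReal.toReal_nonneg) hevent
      (tendsto_errTerm.comp hlog)
  have h1 : Filter.Tendsto (fun n => 1 - (processMeasure n (Good n)ᶜ).toReal) Filter.atTop
      (nhds 1) := by
    simpa using htend.const_sub 1
  have h2 := ENNReal.tendsto_ofReal h1
  rw [ENNReal.ofReal_one] at h2
  refine h2.congr fun n => ?_
  have h3 : processMeasure n (Good n) = 1 - processMeasure n (Good n)ᶜ := by
    have hms : MeasurableSet (Good n)ᶜ := trivial
    have := MeasureTheory.prob_compl_eq_one_sub (μ := processMeasure n) hms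
    rwa [compl_compl] at this
  rw [h3, ENNReal.ofReal_sub _ ENNReal.toReal_nonneg, ENNReal.ofReal_one,
    ENNReal.ofReal_toReal (MeasureTheory.measure_ne_top _ _)]
end
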